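/- Let M be a metric space and let c : [2^ω]^2 → M be a Baire measurable mapping. Then there exist a perfect subset P ⊆ 2^ω and subsets I ⊆ {0,1} and J ⊆ {1}, with J = ∅ if I = {0,1}, such that for all (x_0,x_1), (y_0,y_1) ∈ [P]^2 (pairs written in increasing lexicographic order): c(x_0,x_1) = c(y_0,y_1) if and only if {x_i : i ∈ I} = {y_i : i ∈ I} and {d(x_{j-1},x_j) : j ∈ J} = {d(y_{j-1},y_j) : j ∈ J}. -/

import Mathlib

/-!
The space of increasing pairs is a second countable Baire space. A Baire measurable map on such a
space has, off a meagre set, values outside the largest open set with meagre preimage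
(`meagre_preimage_sUnion`; this is where nonseparable targets are dealt with), and those values lie
in a separable subspace. Hence there is a comeagre set `G` of pairs on which an inequality
`c p ≠ c q` persists in neighbourhoods of `p` and `q` (`exists_residual_separating`). A fusion
argument produces an embedding of the binary tree all of whose pairs lie in `G`, and which moreover
sends different nodes to different levels (`exists_emb_generic`), so that on its range the distance
of two points carries the same information as their meet `x ∩ y`. It remains to treat a map `C` on
pairs for which every inequality is witnessed by finitely many coordinates (`SepC`).

Call a product of two small basic open sets around the points of an increasing pair a box. For each
property of boxes, either boxes with the property exist inside every basic open set, and then an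
embedding can be built that sends all pairs with a given meet into a single such box
(`exists_emb_of_denseBox`), or the property fails for all boxes inside some basic open set. Apply
this to the properties that `C` is independent of the first variable (`XI`), or of the second (`YI`),
constant (`CI`), or a given function of the first variable (`GI`). Up to exchanging the two points by
order reversal, `C` is put in one of five situations: it is constant, or a function of the meet only,
or of the first point only, or of the first point and the meet, or on no box independent of either
variable. In each of them, the value determines on some embedded copy exactly those data of which it
is a function, in the last case both points. The copy is again built by fusion. At each stage the
finitely many points chosen so far are perturbed so that unwanted equalities between values fail; an
equality that survives all small perturbations forces `C` to lose a variable on some box, which the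
situation at hand excludes (`xi_of_persist`), and an inequality, once achieved, is stable
(`canon_of_ext`, `exists_good`).
-/

open Set

/-- The Cantor space `2^ω`. -/
abbrev Cantor : Type := ℕ → Bool

/-- The first coordinate where `x` and `y` differ (`0` if `x = y`). -/
noncomputable def splitLevel (x y : Cantor) : ℕ :=
  letI := Classical.dec (x = y)
  if h : x = y then 0 else Nat.find (Function.ne_iff.mp h)

/-- The metric `d(x,y) = 1/(k+1)`, `k = min{m : x m ≠ y m}`. -/
noncomputable def cdist (x y : Cantor) : ℝ := 1 / (splitLevel x y + 1)

/-- The lexicographic order on `2^ω` induced by `0 < 1`. -/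
def clex (x y : Cantor) : Prop := x ≠ y ∧ x (splitLevel x y) = false

/-- The initial segment `x ↾ k` as an element of `2^{<ω}`. -/
def restr (x : Cantor) (k : ℕ) : List Bool := (List.range k).map x

/-- The longest common initial segment `x ∩ y`. -/
noncomputable def meet (x y : Cantor) : List Bool := restr x (splitLevel x y)

/-- A perfect subset of `2^ω`: nonempty, closed, with no isolated points. -/
def PerfectSet (P : Set Cantor) : Prop := Perfect P ∧ P.Nonempty

/-- A skew subset of `2^ω`. -/
def Skew (P : Set Cantor) : Prop :=
  ∀ x₀ ∈ P, ∀ x₁ ∈ P, ∀ y₀ ∈ P, ∀ y₁ ∈ P, x₀ ≠ x₁ → y₀ ≠ y₁ →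
    cdist x₀ x₁ = cdist y₀ y₁ → meet x₀ x₁ = meet y₀ y₁

/-- Index `i - 1` of the `i`-th gap (for `i ∈ {1,…,n-1}`, reindexed by `Fin (n-1)`). -/
def gapIdx {n : ℕ} (i : Fin (n - 1)) : Fin n := ⟨i.1, by have := i.2; omega⟩

/-- Index `i` of the `i`-th gap. -/
def gapIdx' {n : ℕ} (i : Fin (n - 1)) : Fin n := ⟨i.1 + 1, by have := i.2; omega⟩

/-- `|x_{i-1} ∩ x_i|` for the `i`-th gap of the tuple `X`. -/
noncomputable def gapLen {n : ℕ} (X : Fin n → Cantor) (i : Fin (n - 1)) : ℕ :=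
  splitLevel (X (gapIdx i)) (X (gapIdx' i))

/-- `x_{i-1} ∩ x_i` for the `i`-th gap of the tuple `X`. -/
noncomputable def gapMeet {n : ℕ} (X : Fin n → Cantor) (i : Fin (n - 1)) : List Bool :=
  meet (X (gapIdx i)) (X (gapIdx' i))

/-- `[T]^n` : lexicographically increasing `n`-tuples of elements of `T`. -/
def Tuples (n : ℕ) (T : Set Cantor) : Set (Fin n → Cantor) :=
  {X | (∀ i, X i ∈ T) ∧ ∀ i j : Fin n, i < j → clex (X i) (X j)}

/-- `[T]^n_⪯` : members of `[T]^n` whose gap distances realize the total order `⪯`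
(on `{1,…,n-1}`, reindexed by `Fin (n-1)`):
`d(x_{i-1},x_i) > d(x_{j-1},x_j)` iff `i ⪯ j`, for `i ≠ j`. -/
def OrdTuples (n : ℕ) (prec : Fin (n - 1) → Fin (n - 1) → Prop) (T : Set Cantor) :
    Set (Fin n → Cantor) :=
  {X | X ∈ Tuples n T ∧ ∀ i j : Fin (n - 1), i ≠ j →
      (cdist (X (gapIdx i)) (X (gapIdx' i)) > cdist (X (gapIdx j)) (X (gapIdx' j)) ↔ prec i j)}

/-- `D(X) = {x_{i-1} ∩ x_i : i ∈ {1,…,n-1}}`. -/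
def Dset (n : ℕ) (X : Fin n → Cantor) : Set (List Bool) :=
  {t | ∃ i : Fin (n - 1), t = gapMeet X i}

/-- `D̂(X) = D(X) ∪ {x_i ↾ |x_{j-1} ∩ x_j| : i ≠ j}`. -/
def Dhat (n : ℕ) (X : Fin n → Cantor) : Set (List Bool) :=
  Dset n X ∪ {t | ∃ (i : Fin n) (j : Fin (n - 1)), (i : ℕ) ≠ (j : ℕ) + 1 ∧
    t = restr (X i) (gapLen X j)}

/-- The abstract index set for the nodes of `D̂(X)`; it serves as the fixed
representative `C^n_⪯` of the isomorphism class of the trees `D̂(X)`,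
`X ∈ [2^ω]^n_⪯`, the isomorphism `g_X : D̂(X) → C^n_⪯` being the indexing. -/
abbrev CIdx (n : ℕ) : Type := Fin (n - 1) ⊕ Fin n × Fin (n - 1)

/-- The node of `D̂(X)` indexed by a given element of `C^n_⪯`: `inl j` indexes
`x_{j-1} ∩ x_j` and `inr (i, j)` indexes `x_i ↾ |x_{j-1} ∩ x_j|`. -/
noncomputable def nodeOf {n : ℕ} (X : Fin n → Cantor) : CIdx n → List Bool
  | .inl j => gapMeet X j
  | .inr (i, j) => restr (X i) (gapLen X j)

/-- `D̂(X):J = {x ↾ k : g_X(x ↾ k) ∈ J}` for `J ⊆ C^n_⪯`. -/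
noncomputable def DhatSel {n : ℕ} (X : Fin n → Cantor) (J : Set (CIdx n)) : Set (List Bool) :=
  nodeOf X '' J

/-- A map is Baire measurable if preimages of open sets have the Baire property. -/
def BaireMeasurableFun {α β : Type*} [TopologicalSpace α] [TopologicalSpace β]
    (f : α → β) : Prop :=
  ∀ U : Set β, IsOpen U → BaireMeasurableSet (f ⁻¹' U)

/-- `[T]^2` : lexicographically increasing pairs of elements of `T`. -/
def PairsSet (T : Set Cantor) : Set (Cantor × Cantor) :=
  {p | p.1 ∈ T ∧ p.2 ∈ T ∧ clex p.1 p.2}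

/-! ### Baire category: meagre unions and measurable maps into metric spaces -/

open Filter Topology TopologicalSpace

theorem exists_open_dense_seq {X : Type*} [TopologicalSpace X] {s : Set X}
    (hs : s ∈ residual X) :
    ∃ D : ℕ → Set X, (∀ n, IsOpen (D n) ∧ Dense (D n)) ∧ ∀ x, (∀ n, x ∈ D n) → x ∈ s := by
  obtain ⟨S, ho, hd, hc, hsub⟩ := mem_residual_iff.1 hs
  have hc' : (insert univ S).Countable := hc.insert _
  obtain ⟨D, hD⟩ := hc'.exists_eq_range (insert_nonempty _ _)
  refine ⟨D, fun n => ?_, fun x hx => hsub ?_⟩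
  · have : D n ∈ insert univ S := hD ▸ mem_range_self n
    rcases this with h | h
    · rw [h]; exact ⟨isOpen_univ, dense_univ⟩
    · exact ⟨ho _ h, hd _ h⟩
  · intro t ht
    have : t ∈ range D := hD ▸ mem_insert_of_mem _ ht
    obtain ⟨n, rfl⟩ := this
    exact hx n

theorem nonempty_inter_residual {X : Type*} [TopologicalSpace X] [BaireSpace X] {s U : Set X}
    (hs : s ∈ residual X) (hU : IsOpen U) (hne : U.Nonempty) : (U ∩ s).Nonempty :=
  (dense_of_mem_residual hs).inter_open_nonempty U hU hne

/-- A chain condition of Kuratowski-Ulam type: if `A` is covered by initial segments, each meagre,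
of a linear preorder all of whose unions of classes have the Baire property, then `A` is meagre.
The Baire property of the sets `A ∩ f ⁻¹' K` replaces that of the preorder as a subset of the
square. -/
theorem meagre_of_chain {X ι : Type*} [TopologicalSpace X] [BaireSpace X]
    [SecondCountableTopology X] [LinearOrder ι] (f : X → ι) (A : Set X)
    (hK : ∀ K : Set ι, BaireMeasurableSet (A ∩ f ⁻¹' K))
    (hI : ∀ x ∈ A, IsMeagre (A ∩ f ⁻¹' Iic (f x))) : IsMeagre A := by
  by_contra hA
  -- `D α n` is a sequence of dense open sets whose intersection avoids the segment below `α`.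
  have hD : ∀ α : ι, ∃ D : ℕ → Set X, IsMeagre (A ∩ f ⁻¹' Iic α) →
      (∀ n, IsOpen (D n) ∧ Dense (D n)) ∧ ∀ x, (∀ n, x ∈ D n) → x ∉ A ∩ f ⁻¹' Iic α := by
    intro α
    by_cases h : IsMeagre (A ∩ f ⁻¹' Iic α)
    · obtain ⟨D, hD⟩ := exists_open_dense_seq h
      exact ⟨D, fun _ => hD⟩
    · exact ⟨fun _ => ∅, fun h' => absurd h' h⟩
  choose D hD using hD
  -- For fixed `n`, the pairs `(x, y)` with `x ∈ D (f y) n` are covered, using a countable base, by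
  -- the rectangles `U × f ⁻¹' K n U`, and `O n U` is the open set almost equal to the second side.
  set K : ℕ → Set X → Set ι := fun n U => {α | IsMeagre (A ∩ f ⁻¹' Iic α) ∧ U ⊆ D α n} with hKdef
  choose O hOo hOe using fun n U => (hK (K n U)).residualEq_isOpen
  obtain ⟨OA, hOAo, hOAe⟩ := (by simpa using hK univ : BaireMeasurableSet A).residualEq_isOpen
  set B := countableBasis X
  have hB : IsTopologicalBasis B := isBasis_countableBasis X
  have hBc : B.Countable := countable_countableBasis X
  have hH : ∀ᶠ y in residual X, (y ∈ A ↔ y ∈ OA) ∧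
      ∀ n, ∀ U ∈ B, (y ∈ A ∩ f ⁻¹' K n U ↔ y ∈ O n U) := by
    refine (eventuallyEq_set.1 hOAe).and ?_
    rw [eventually_countable_forall]
    intro n
    rw [eventually_countable_ball hBc]
    exact fun U _ => eventuallyEq_set.1 (hOe n U)
  -- The points `x` whose section of the `n`-th rectangle family meets `V`.
  set G : ℕ → Set X → Set X := fun n V => ⋃₀ {U | U ∈ B ∧ (O n U ∩ V ∩ OA).Nonempty} with hG
  have hGres : ∀ n, ∀ V ∈ B, (V ∩ OA).Nonempty → G n V ∈ residual X := by
    intro n V hV hne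
    refine residual_of_dense_open (isOpen_sUnion fun U hU => hB.isOpen hU.1) ?_
    rw [dense_iff_inter_open]
    intro U0 hU0 hU0ne
    obtain ⟨y, ⟨hyV, hyOA⟩, hyH⟩ := nonempty_inter_residual hH ((hB.isOpen hV).inter hOAo) hne
    have hyA : y ∈ A := hyH.1.2 hyOA
    have hDy := hD (f y) (hI y hyA)
    obtain ⟨x1, hx1U, hx1D⟩ := (hDy.1 n).2.inter_open_nonempty U0 hU0 hU0ne
    obtain ⟨U, hUB, hxU, hUs⟩ :=
      hB.exists_subset_of_mem_open (⟨hx1U, hx1D⟩ : x1 ∈ U0 ∩ D (f y) n) (hU0.inter (hDy.1 n).1)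
    refine ⟨x1, hx1U, U, ⟨hUB, y, ⟨?_, hyV⟩, hyOA⟩, hxU⟩
    exact (hyH.2 n U hUB).1 ⟨hyA, hI y hyA, fun z hz => (hUs hz).2⟩
  have hGall : ∀ᶠ x in residual X, ∀ n, ∀ V ∈ B, (V ∩ OA).Nonempty → x ∈ G n V := by
    rw [eventually_countable_forall]
    intro n
    rw [eventually_countable_ball hBc]
    intro V hV
    by_cases hne : (V ∩ OA).Nonempty
    · filter_upwards [hGres n V hV hne] with x hx _ using hx
    · exact Eventually.of_forall fun x h => absurd h hne
  obtain ⟨x, hxA, hx⟩ : ∃ x ∈ A, ∀ n, ∀ V ∈ B, (V ∩ OA).Nonempty → x ∈ G n V := by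
    by_contra hcon
    push Not at hcon
    apply hA
    filter_upwards [hGall] with x hx hxA
    obtain ⟨n, V, hV, hne, hn⟩ := hcon x hxA
    exact hn (hx n V hV hne)
  -- Almost every `y ∈ A` satisfies `x ∈ D (f y) n` for all `n`, hence lies below `x`.
  set E : ℕ → Set X := fun n => (⋃₀ (O n '' {U | U ∈ B ∧ x ∈ U})) ∪ (closure OA)ᶜ with hE
  have hEres : ∀ n, E n ∈ residual X := by
    intro n
    refine residual_of_dense_open (IsOpen.union (isOpen_sUnion ?_) isClosed_closure.isOpen_compl) ?_
    · rintro _ ⟨U, _, rfl⟩; exact hOo n U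
    · rw [hB.dense_iff]
      intro V hV hVne
      by_cases hne : (V ∩ OA).Nonempty
      · obtain ⟨U, ⟨hUB, y, ⟨hyO, hyV⟩, _⟩, hxU⟩ := hx n V hV hne
        exact ⟨y, hyV, Or.inl ⟨_, ⟨U, ⟨hUB, hxU⟩, rfl⟩, hyO⟩⟩
      · obtain ⟨y, hy⟩ := hVne
        refine ⟨y, hy, Or.inr fun hcl => hne ?_⟩
        exact mem_closure_iff.1 hcl V (hB.isOpen hV) hy
  apply hA
  have hEall : ∀ᶠ y in residual X, ∀ n, y ∈ E n := eventually_countable_forall.2 hEres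
  filter_upwards [hEall, hH, hI x hxA] with y hyE hyH hyI hyA
  apply hyI
  refine ⟨hyA, ?_⟩
  by_contra hlt
  have hxy : f x ≤ f y := le_of_lt (not_le.1 hlt)
  refine (hD (f y) (hI y hyA)).2 x (fun n => ?_) ⟨hxA, hxy⟩
  rcases hyE n with ⟨_, ⟨U, ⟨hUB, hxU⟩, rfl⟩, hyO⟩ | h
  · exact ((hyH.2 n U hUB).2 hyO).2.2 hxU
  · exact absurd (subset_closure (hyH.1.1 hyA)) h

/-- A well-ordered union of open sets with meagre preimages has meagre preimage. Each member is
shrunk to the part outside the earlier members and well inside itself; at a fixed scale these parts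
have disjoint open neighbourhoods, to which `meagre_of_chain` applies. -/
theorem meagre_preimage_iUnion {X M ι : Type*} [TopologicalSpace X] [BaireSpace X]
    [SecondCountableTopology X] [PseudoMetricSpace M] [LinearOrder ι] [WellFoundedLT ι]
    (c : X → M) (hc : BaireMeasurableFun c) (W : ι → Set M) (hWo : ∀ a, IsOpen (W a))
    (hWm : ∀ a, IsMeagre (c ⁻¹' W a)) : IsMeagre (c ⁻¹' ⋃ a, W a) := by
  classical
  have key : ∀ S : Set ι, (∀ a ∈ S, ∀ b ≤ a, b ∈ S) →
      (∀ a ∈ S, IsMeagre (c ⁻¹' ⋃ b ∈ Iio a, W b)) →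
      IsMeagre (c ⁻¹' ⋃ b ∈ S, W b) := by
    intro S hS hlow
    -- `Dd k a` is the part of `W a` outside the earlier sets and at distance at least `2 r k` from
    -- the complement of `W a`; `T k a` is its `r k`-neighbourhood.
    set r : ℕ → ℝ := fun k => 1 / ((k : ℝ) + 1) / 2 with hr
    have hrpos : ∀ k, 0 < r k := fun k => by positivity
    set Dd : ℕ → ι → Set M := fun k a =>
      {p | p ∈ W a ∧ Metric.ball p (2 * r k) ⊆ W a ∧ ∀ b < a, p ∉ W b} with hDd
    set T : ℕ → ι → Set M := fun k a => ⋃ p ∈ Dd k a, Metric.ball p (r k) with hT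
    have hTo : ∀ k a, IsOpen (T k a) := fun k a =>
      isOpen_biUnion fun _ _ => Metric.isOpen_ball
    have hTsub : ∀ k a, T k a ⊆ W a := by
      intro k a q hq
      obtain ⟨p, hp, hq⟩ := mem_iUnion₂.1 hq
      exact hp.2.1 (Metric.ball_subset_ball (by linarith [hrpos k]) hq)
    have hTlt : ∀ k a b, a < b → ∀ q, q ∈ T k a → q ∈ T k b → False := by
      intro k a b hab q hqa hqb
      obtain ⟨p, hp, hq⟩ := mem_iUnion₂.1 hqa
      obtain ⟨p', hp', hq'⟩ := mem_iUnion₂.1 hqb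
      refine hp'.2.2 a hab (hp.2.1 ?_)
      rw [Metric.mem_ball] at hq hq' ⊢
      have := dist_triangle_left p' p q
      linarith
    have hTeq : ∀ k a b, ∀ q, q ∈ T k a → q ∈ T k b → a = b := by
      intro k a b q ha hb
      rcases lt_trichotomy a b with h | h | h
      · exact (hTlt k a b h q ha hb).elim
      · exact h
      · exact (hTlt k b a h q hb ha).elim
    have hmeag : ∀ k, IsMeagre (c ⁻¹' ⋃ a ∈ S, T k a) := by
      intro k
      set A := c ⁻¹' ⋃ a ∈ S, T k a with hA
      by_cases hne : Nonempty ι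
      swap
      · have : A = ∅ := by
          ext x; simp only [hA, mem_preimage, mem_iUnion, mem_empty_iff_false, iff_false]
          rintro ⟨a, _⟩; exact hne ⟨a⟩
        rw [this]; exact IsMeagre.empty
      set f : X → ι := fun x => if h : ∃ a ∈ S, c x ∈ T k a then h.choose else hne.some with hf
      have hfspec : ∀ x a, a ∈ S → c x ∈ T k a → f x = a := by
        intro x a ha hx
        have h : ∃ a ∈ S, c x ∈ T k a := ⟨a, ha, hx⟩
        have : f x = h.choose := by simp only [hf]; rw [dif_pos h]
        rw [this]
        exact hTeq k _ _ _ h.choose_spec.2 hx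
      have hAmem : ∀ x ∈ A, f x ∈ S ∧ c x ∈ T k (f x) := by
        intro x hx
        obtain ⟨a, ha, hx⟩ := mem_iUnion₂.1 hx
        rw [hfspec x a ha hx]; exact ⟨ha, hx⟩
      refine meagre_of_chain f A (fun K => ?_) (fun x hx => ?_)
      · have : A ∩ f ⁻¹' K = c ⁻¹' ⋃ a ∈ S ∩ K, T k a := by
          ext x
          constructor
          · rintro ⟨hx, hxK⟩
            have := hAmem x hx
            exact mem_iUnion₂.2 ⟨f x, ⟨this.1, hxK⟩, this.2⟩
          · intro hx
            obtain ⟨a, ha, hx⟩ := mem_iUnion₂.1 hx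
            refine ⟨mem_iUnion₂.2 ⟨a, ha.1, hx⟩, ?_⟩
            rw [mem_preimage, hfspec x a ha.1 hx]; exact ha.2
        rw [this]
        exact hc _ (isOpen_biUnion fun a _ => hTo k a)
      · have hfx := hAmem x hx
        refine IsMeagre.mono ?_ ((hlow (f x) hfx.1).union (hWm (f x)))
        rintro y ⟨hy, hle⟩
        have hfy := hAmem y hy
        rcases lt_or_eq_of_le (show f y ≤ f x from hle) with h | h
        · exact Or.inl (mem_iUnion₂.2 ⟨f y, h, hTsub _ _ hfy.2⟩)
        · right; rw [← h]; exact hTsub _ _ hfy.2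
    refine IsMeagre.mono ?_ (isMeagre_iUnion hmeag)
    intro x hx
    obtain ⟨a, ha, hx⟩ := mem_iUnion₂.1 hx
    set Z : Set ι := {b | c x ∈ W b} with hZ
    have hZne : Z.Nonempty := ⟨a, hx⟩
    set b := WellFounded.min (wellFounded_lt (α := ι)) Z hZne with hb
    have hbZ : c x ∈ W b := WellFounded.min_mem (wellFounded_lt (α := ι)) Z hZne
    have hbmin : ∀ d < b, c x ∉ W d := fun d hd h =>
      WellFounded.not_lt_min (wellFounded_lt (α := ι)) Z (x := d) h hd
    have hba : b ≤ a := not_lt.1 fun h => hbmin a h hx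
    obtain ⟨ε, hε, hball⟩ := Metric.isOpen_iff.1 (hWo b) _ hbZ
    obtain ⟨k, hk⟩ := exists_nat_one_div_lt hε
    refine mem_iUnion.2 ⟨k, mem_iUnion₂.2 ⟨b, hS a ha b hba, mem_iUnion₂.2
      ⟨c x, ⟨hbZ, ?_, hbmin⟩, Metric.mem_ball_self (hrpos k)⟩⟩⟩
    refine (Metric.ball_subset_ball ?_).trans hball
    simp only [hr]; linarith
  have hIio : ∀ a : ι, IsMeagre (c ⁻¹' ⋃ b ∈ Iio a, W b) := by
    intro a
    induction a using WellFoundedLT.induction with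
    | ind a ih => exact key (Iio a) (fun a ha b hb => lt_of_le_of_lt hb ha) ih
  exact IsMeagre.mono (by simp) (key univ (fun _ _ _ _ => mem_univ _) fun a _ => hIio a)

theorem meagre_preimage_sUnion {X M : Type*} [TopologicalSpace X] [BaireSpace X]
    [SecondCountableTopology X] [PseudoMetricSpace M] (c : X → M) (hc : BaireMeasurableFun c) :
    IsMeagre (c ⁻¹' ⋃₀ {U | IsOpen U ∧ IsMeagre (c ⁻¹' U)}) := by
  set 𝒰 := {U : Set M | IsOpen U ∧ IsMeagre (c ⁻¹' U)}
  obtain ⟨l, w⟩ := exists_wellFoundedLT 𝒰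
  refine IsMeagre.mono ?_ (@meagre_preimage_iUnion X M 𝒰 _ _ _ _ l w c hc (fun a => (a : Set M))
    (fun a => a.2.1) (fun a => a.2.2))
  rintro x ⟨U, hU, hx⟩
  exact mem_iUnion.2 ⟨⟨U, hU⟩, hx⟩

/-- For a Baire measurable map into an arbitrary (possibly nonseparable) metric space there is a
comeagre set on which different values are witnessed by open neighbourhoods of the points. Almost
all values avoid `V0`, the largest open set with meagre preimage, and the complement of `V0` is
separable. -/
theorem exists_residual_separating {X M : Type*} [TopologicalSpace X] [BaireSpace X]
    [SecondCountableTopology X] [MetricSpace M] (c : X → M) (hc : BaireMeasurableFun c) :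
    ∃ G ∈ residual X, ∀ p ∈ G, ∀ q ∈ G, c p ≠ c q →
      ∃ U V : Set X, IsOpen U ∧ IsOpen V ∧ p ∈ U ∧ q ∈ V ∧
        ∀ p' ∈ U ∩ G, ∀ q' ∈ V ∩ G, c p' ≠ c q' := by
  classical
  set V0 := ⋃₀ {U | IsOpen U ∧ IsMeagre (c ⁻¹' U)} with hV0
  have hV0m : IsMeagre (c ⁻¹' V0) := meagre_preimage_sUnion c hc
  have hnm : ∀ m ∉ V0, ∀ r > 0, ¬ IsMeagre (c ⁻¹' Metric.ball m r) := fun m hm r hr h =>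
    hm ⟨_, ⟨Metric.isOpen_ball, h⟩, Metric.mem_ball_self hr⟩
  set B := countableBasis X
  have hB : IsTopologicalBasis B := isBasis_countableBasis X
  have hBc : B.Countable := countable_countableBasis X
  set r : ℕ → ℝ := fun k => 1 / ((k : ℝ) + 1) with hr
  have hrpos : ∀ k, 0 < r k := fun k => by positivity
  set Pk : Set X → ℕ → M → Prop := fun U k m => m ∉ V0 ∧
    ∀ᶠ x in residual X, x ∈ U → c x ∈ Metric.ball m (r k) with hPk
  have hex : ∀ m ∉ V0, ∀ k, ∃ U ∈ B, U.Nonempty ∧ Pk U k m := by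
    intro m hm k
    obtain ⟨O, hO, hOe⟩ := (hc _ (Metric.isOpen_ball (x := m) (ε := r k))).residualEq_isOpen
    have hOne : O.Nonempty := by
      by_contra h
      rw [not_nonempty_iff_eq_empty] at h
      apply hnm m hm _ (hrpos k)
      filter_upwards [eventuallyEq_set.1 hOe] with x hx hx'
      rw [hx, h] at hx'; exact hx'
    obtain ⟨x, hx⟩ := hOne
    obtain ⟨U, hUB, hxU, hUs⟩ := hB.exists_subset_of_mem_open hx hO
    refine ⟨U, hUB, ⟨x, hxU⟩, hm, ?_⟩
    filter_upwards [eventuallyEq_set.1 hOe] with y hy hyU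
    exact hy.2 (hUs hyU)
  -- A countable family of balls that contains a base at every point outside `V0`.
  set Bs : Set (Set M) := ⋃ U ∈ B, ⋃ k : ℕ, ⋃ j : ℕ,
    {Z | ∃ h : ∃ m, Pk U k m, Z = Metric.ball h.choose (r j)} with hBs
  have hBsc : Bs.Countable := by
    refine hBc.biUnion fun U _ => countable_iUnion fun k => countable_iUnion fun j => ?_
    refine Subsingleton.countable ?_
    rintro Z ⟨h, rfl⟩ Z' ⟨h', rfl⟩
    rfl
  have hBso : ∀ Z ∈ Bs, IsOpen Z := by
    intro Z hZ
    simp only [hBs, mem_iUnion] at hZ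
    obtain ⟨U, _, k, j, h, rfl⟩ := hZ
    exact Metric.isOpen_ball
  have hBsball : ∀ m ∉ V0, ∀ ε > 0, ∃ Z ∈ Bs, m ∈ Z ∧ Z ⊆ Metric.ball m ε := by
    intro m hm ε hε
    obtain ⟨j, hj⟩ := exists_nat_one_div_lt (show 0 < ε / 4 by positivity)
    obtain ⟨k, hk⟩ := exists_nat_one_div_lt (show 0 < r j / 2 by have := hrpos j; positivity)
    obtain ⟨U, hUB, hUne, hP⟩ := hex m hm k
    have h : ∃ m, Pk U k m := ⟨m, hP⟩
    have hP' := h.choose_spec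
    obtain ⟨x, hxU, hx1, hx2⟩ := nonempty_inter_residual (hP.2.and hP'.2) (hB.isOpen hUB) hUne
    have h1 := hx1 hxU
    have h2 := hx2 hxU
    rw [Metric.mem_ball] at h1 h2
    have hd : dist m h.choose < r j := by
      have := dist_triangle_left m h.choose (c x)
      change 1 / ((k : ℝ) + 1) < _ at hk
      simp only [hr] at *
      linarith
    refine ⟨Metric.ball h.choose (r j), ?_, hd, ?_⟩
    · simp only [hBs, mem_iUnion]
      exact ⟨U, hUB, k, j, h, rfl⟩
    · refine Metric.ball_subset_ball' ?_
      rw [dist_comm] at hd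
      simp only [hr] at *
      linarith
  choose! O hOo hOe using fun Z (hZ : Z ∈ Bs) => (hc Z (hBso Z hZ)).residualEq_isOpen
  refine ⟨{x | c x ∉ V0 ∧ ∀ Z ∈ Bs, (c x ∈ Z ↔ x ∈ O Z)}, ?_, ?_⟩
  · refine Filter.Eventually.and hV0m ?_
    rw [eventually_countable_ball hBsc]
    exact fun Z hZ => eventuallyEq_set.1 (hOe Z hZ)
  · rintro p ⟨hp0, hp⟩ q ⟨hq0, hq⟩ hpq
    have hd : 0 < dist (c p) (c q) := dist_pos.2 hpq
    obtain ⟨Z, hZ, hpZ, hZs⟩ := hBsball _ hp0 (dist (c p) (c q) / 2) (by positivity)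
    obtain ⟨Y, hY, hqY, hYs⟩ := hBsball _ hq0 (dist (c p) (c q) / 2) (by positivity)
    refine ⟨O Z, O Y, hOo Z hZ, hOo Y hY, (hp Z hZ).1 hpZ, (hq Y hY).1 hqY, ?_⟩
    rintro p' ⟨hp', hp'G⟩ q' ⟨hq', hq'G⟩ heq
    have h1 := hZs ((hp'G.2 Z hZ).2 hp')
    have h2 := hYs ((hq'G.2 Y hY).2 hq')
    rw [heq] at h1
    rw [Metric.mem_ball] at h1 h2
    have := dist_triangle_left (c p) (c q) (c q')
    linarith

/-! ### Splitting levels, meets and embeddings of the Cantor space -/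

/-- `x` and `y` have the same first `m` coordinates. -/
def Agr (m : ℕ) (x y : Cantor) : Prop := ∀ k < m, x k = y k

theorem Agr.refl (m : ℕ) (x : Cantor) : Agr m x x := fun _ _ => rfl

theorem Agr.symm {m : ℕ} {x y : Cantor} (h : Agr m x y) : Agr m y x := fun k hk => (h k hk).symm

theorem Agr.trans {m : ℕ} {x y z : Cantor} (h : Agr m x y) (h' : Agr m y z) : Agr m x z :=
  fun k hk => (h k hk).trans (h' k hk)

theorem Agr.mono {m n : ℕ} {x y : Cantor} (h : Agr n x y) (hmn : m ≤ n) : Agr m x y :=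
  fun k hk => h k (lt_of_lt_of_le hk hmn)

theorem splitLevel_ne {x y : Cantor} (h : x ≠ y) : x (splitLevel x y) ≠ y (splitLevel x y) := by
  classical
  unfold splitLevel
  rw [dif_neg h]
  exact Nat.find_spec (Function.ne_iff.mp h)

theorem agr_splitLevel (x y : Cantor) : Agr (splitLevel x y) x y := by
  classical
  intro k hk
  by_cases h : x = y
  · rw [h]
  · unfold splitLevel at hk
    rw [dif_neg h] at hk
    exact not_not.1 (Nat.find_min (Function.ne_iff.mp h) hk)

theorem splitLevel_eq {x y : Cantor} {k : ℕ} (h : Agr k x y) (hk : x k ≠ y k) :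
    splitLevel x y = k := by
  have hne : x ≠ y := fun e => hk (by rw [e])
  rcases lt_trichotomy (splitLevel x y) k with h' | h' | h'
  · exact absurd (h _ h') (splitLevel_ne hne)
  · exact h'
  · exact absurd (agr_splitLevel x y k h') hk

theorem Agr.le_splitLevel {x y : Cantor} {m : ℕ} (h : Agr m x y) (hne : x ≠ y) :
    m ≤ splitLevel x y := by
  by_contra hlt
  exact splitLevel_ne hne (h _ (not_le.1 hlt))

theorem splitLevel_comm (x y : Cantor) : splitLevel x y = splitLevel y x := by
  by_cases h : x = y
  · rw [h]
  · exact (splitLevel_eq (agr_splitLevel x y).symm (splitLevel_ne h).symm).symm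

theorem clex_iff {x y : Cantor} : clex x y ↔ ∃ k, Agr k x y ∧ x k = false ∧ y k = true := by
  constructor
  · rintro ⟨hne, h0⟩
    refine ⟨_, agr_splitLevel x y, h0, ?_⟩
    have := splitLevel_ne hne
    rw [h0] at this
    simpa using this.symm
  · rintro ⟨k, hk, h0, h1⟩
    have hs : splitLevel x y = k := splitLevel_eq hk (by rw [h0, h1]; decide)
    refine ⟨fun e => ?_, by rw [hs]; exact h0⟩
    rw [e, h1] at h0; cases h0

theorem clex_false {x y : Cantor} (h : clex x y) : x (splitLevel x y) = false := h.2

theorem clex_true {x y : Cantor} (h : clex x y) : y (splitLevel x y) = true := by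
  have := splitLevel_ne h.1
  rw [h.2] at this
  simpa using this.symm

theorem clex_asymm {x y : Cantor} (h : clex x y) (h' : clex y x) : False := by
  have h1 := clex_true h
  have h2 := clex_false h'
  rw [splitLevel_comm y x, h1] at h2
  cases h2

theorem clex_total {x y : Cantor} (h : x ≠ y) : clex x y ∨ clex y x := by
  have hne := splitLevel_ne h
  cases hx : x (splitLevel x y) with
  | false => exact Or.inl ⟨h, hx⟩
  | true =>
    refine Or.inr ⟨h.symm, ?_⟩
    rw [splitLevel_comm y x]
    rw [hx] at hne
    simpa using hne.symm

/-- Two pairs branch at the same node: `x ∩ y = x' ∩ y'`. Meets are compared through their length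
and the coordinates below it. -/
def SM (x y x' y' : Cantor) : Prop :=
  splitLevel x y = splitLevel x' y' ∧ Agr (splitLevel x y) x x'

theorem SM.refl (x y : Cantor) : SM x y x y := ⟨rfl, Agr.refl _ _⟩

theorem SM.symm {x y x' y' : Cantor} (h : SM x y x' y') : SM x' y' x y :=
  ⟨h.1.symm, by rw [← h.1]; exact h.2.symm⟩

theorem SM.trans {x y x' y' x'' y'' : Cantor} (h : SM x y x' y') (h' : SM x' y' x'' y'') :
    SM x y x'' y'' :=
  ⟨h.1.trans h'.1, h.2.trans (by rw [h.1]; exact h'.2)⟩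

theorem splitLevel_stable {x y x' y' : Cantor} {m : ℕ} (h : x ≠ y) (hm : splitLevel x y < m)
    (hx : Agr m x x') (hy : Agr m y y') : splitLevel x' y' = splitLevel x y := by
  refine splitLevel_eq ?_ ?_
  · exact ((hx.mono hm.le).symm.trans (agr_splitLevel x y)).trans (hy.mono hm.le)
  · rw [← hx _ hm, ← hy _ hm]; exact splitLevel_ne h

theorem clex_stable {x y x' y' : Cantor} {m : ℕ} (h : clex x y) (hm : splitLevel x y < m)
    (hx : Agr m x x') (hy : Agr m y y') : clex x' y' := by
  refine clex_iff.2 ⟨splitLevel x y, ?_, ?_, ?_⟩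
  · exact ((hx.mono hm.le).symm.trans (agr_splitLevel x y)).trans (hy.mono hm.le)
  · rw [← hx _ hm]; exact clex_false h
  · rw [← hy _ hm]; exact clex_true h

theorem SM_stable {x y x' y' : Cantor} {m : ℕ} (h : x ≠ y) (hm : splitLevel x y < m)
    (hx : Agr m x x') (hy : Agr m y y') : SM x y x' y' :=
  ⟨(splitLevel_stable h hm hx hy).symm, hx.mono hm.le⟩

theorem splitLevel_lt_of_not_agr {x y : Cantor} {m : ℕ} (h : ¬ Agr m x y) : splitLevel x y < m := by
  by_contra hlt
  exact h ((agr_splitLevel x y).mono (not_lt.1 hlt))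

theorem ne_of_not_agr {x y : Cantor} {m : ℕ} (h : ¬ Agr m x y) : x ≠ y := by
  rintro rfl; exact h (Agr.refl _ _)

theorem not_agr_of_lt {x y : Cantor} {m : ℕ} (h : x ≠ y) (hm : splitLevel x y < m) :
    ¬ Agr m x y := fun ha => splitLevel_ne h (ha _ hm)

/-- A pair close to points `u`, `v` that differ before `m` branches where `u` and `v` do. -/
theorem clex_of_agr {u v x y : Cantor} {m : ℕ} (hn : ¬ Agr m u v) (hx : Agr m u x)
    (hy : Agr m v y) (h : clex x y) : clex u v ∧ SM u v x y ∧ splitLevel u v < m := by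
  have hl := splitLevel_lt_of_not_agr hn
  have hne := ne_of_not_agr hn
  refine ⟨clex_stable h ?_ hx.symm hy.symm, SM_stable hne hl hx hy, hl⟩
  rwa [splitLevel_stable hne hl hx hy]

/-- An embedding of the Cantor space into itself that is induced by an embedding of the binary
tree: it is continuous, increasing, and the meet `φ x ∩ φ y` is an injective function of the
meet `x ∩ y`. -/
structure Emb (φ : Cantor → Cantor) : Prop where
  cont : ∀ m, ∃ k, ∀ x x', Agr k x x' → Agr m (φ x) (φ x')
  mono : ∀ x y, clex x y → clex (φ x) (φ y)
  sm : ∀ x y x' y', clex x y → clex x' y' → (SM (φ x) (φ y) (φ x') (φ y') ↔ SM x y x' y')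

theorem Emb.comp {φ ψ : Cantor → Cantor} (hφ : Emb φ) (hψ : Emb ψ) : Emb (φ ∘ ψ) where
  cont := fun m => by
    obtain ⟨k, hk⟩ := hφ.cont m
    obtain ⟨l, hl⟩ := hψ.cont k
    exact ⟨l, fun x x' h => hk _ _ (hl _ _ h)⟩
  mono := fun x y h => hφ.mono _ _ (hψ.mono _ _ h)
  sm := fun x y x' y' h h' =>
    (hφ.sm _ _ _ _ (hψ.mono _ _ h) (hψ.mono _ _ h')).trans (hψ.sm _ _ _ _ h h')

theorem Emb.injective {φ : Cantor → Cantor} (hφ : Emb φ) : Function.Injective φ := by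
  intro x y h
  by_contra hne
  rcases clex_total hne with h' | h'
  · exact (hφ.mono _ _ h').1 h
  · exact (hφ.mono _ _ h').1 h.symm

theorem Emb.continuous {φ : Cantor → Cantor} (hφ : Emb φ) : Continuous φ := by
  refine continuous_pi fun i => ?_
  rw [← IsLocallyConstant.iff_continuous, IsLocallyConstant.iff_eventually_eq]
  intro x
  obtain ⟨k, hk⟩ := hφ.cont (i + 1)
  have ho : IsOpen (PiNat.cylinder x k) := PiNat.isOpen_cylinder _ x k
  filter_upwards [ho.mem_nhds (PiNat.self_mem_cylinder x k)] with y hy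
  exact (hk x y (fun j hj => (PiNat.mem_cylinder_iff.1 hy j hj).symm) i (Nat.lt_succ_self i)).symm

/-- The image of an embedding is a perfect set. -/
theorem Emb.perfectSet_range {φ : Cantor → Cantor} (hφ : Emb φ) : PerfectSet (range φ) := by
  refine ⟨⟨(isCompact_range hφ.continuous).isClosed, ?_⟩, range_nonempty φ⟩
  rintro _ ⟨x, rfl⟩
  rw [accPt_iff_nhds]
  intro U hU
  have : φ ⁻¹' U ∈ 𝓝 x := hφ.continuous.continuousAt hU
  obtain ⟨n, hn⟩ : ∃ n, PiNat.cylinder x n ⊆ φ ⁻¹' U := by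
    obtain ⟨V, hVU, hVo, hxV⟩ := mem_nhds_iff.1 this
    have hb := (PiNat.isTopologicalBasis_cylinders (fun _ : ℕ => Bool)).exists_subset_of_mem_open
      hxV hVo
    obtain ⟨_, ⟨y, n, rfl⟩, hxy, hs⟩ := hb
    refine ⟨n, ?_⟩
    rw [PiNat.mem_cylinder_iff_eq.1 hxy]
    exact hs.trans hVU
  refine ⟨φ (Function.update x n (!x n)), ⟨hn (PiNat.update_mem_cylinder x n _), mem_range_self _⟩, ?_⟩
  intro h
  have := congrFun (hφ.injective h) n
  simp at this

theorem length_restr (x : Cantor) (n : ℕ) : (restr x n).length = n := by simp [restr]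

theorem restr_succ (x : Cantor) (n : ℕ) : restr x (n + 1) = restr x n ++ [x n] := by
  simp [restr, List.range_succ]

theorem restr_eq_iff {x y : Cantor} {n : ℕ} : restr x n = restr y n ↔ Agr n x y := by
  simp [restr, Agr]

theorem exists_snoc {n : ℕ} {a : List Bool} (h : a.length = n + 1) :
    ∃ s i, s.length = n ∧ a = s ++ [i] := by
  rcases List.eq_nil_or_concat a with rfl | ⟨s, i, rfl⟩
  · simp at h
  · exact ⟨s, i, by simpa using h, by simp⟩

theorem finite_length (n : ℕ) : {s : List Bool | s.length = n}.Finite := List.finite_length_eq Bool n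

/-- A labelling of the nodes of length `n + 1`, given by the labels of left and right children. -/
theorem exists_join (f g : List Bool → Cantor) :
    ∃ z : List Bool → Cantor, ∀ s, z (s ++ [false]) = f s ∧ z (s ++ [true]) = g s :=
  ⟨fun l => if l.getLast? = some true then g l.dropLast else f l.dropLast, fun s => by simp⟩

/-! ### Fusion -/

/-- At precision `m`, the points attached to the nodes of length `n` are pairwise distinct. -/
def Apart (n : ℕ) (z : List Bool → Cantor) (m : ℕ) : Prop :=
  ∀ a b : List Bool, a.length = n → b.length = n → a ≠ b → ¬ Agr m (z a) (z b)

/-- `z'` splits, for each node `s` of length `n`, the point `z s` into two points that agree with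
it up to precision `m`. -/
def Split (n : ℕ) (z : List Bool → Cantor) (m : ℕ) (z' : List Bool → Cantor) : Prop :=
  ∀ s : List Bool, s.length = n → Agr m (z s) (z' (s ++ [false])) ∧
    Agr m (z s) (z' (s ++ [true])) ∧ clex (z' (s ++ [false])) (z' (s ++ [true]))

theorem Split.agr {n m : ℕ} {z z' : List Bool → Cantor} (h : Split n z m z') {s : List Bool}
    (hs : s.length = n) (i : Bool) : Agr m (z s) (z' (s ++ [i])) := by
  cases i
  · exact (h s hs).1
  · exact (h s hs).2.1

theorem Split.ne {n m : ℕ} {z z' : List Bool → Cantor} (hI : Apart n z m) (h : Split n z m z')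
    {a b : List Bool} (ha : a.length = n + 1) (hb : b.length = n + 1) (hab : a ≠ b) :
    z' a ≠ z' b := by
  obtain ⟨s, i, hs, rfl⟩ := exists_snoc ha
  obtain ⟨t, j, ht, rfl⟩ := exists_snoc hb
  by_cases hst : s = t
  · subst hst
    cases i <;> cases j
    · exact absurd rfl hab
    · exact (h s hs).2.2.1
    · exact (h s hs).2.2.1.symm
    · exact absurd rfl hab
  · intro he
    refine hI s t hs ht hst ((h.agr hs i).trans ?_)
    rw [he]; exact (h.agr ht j).symm

theorem exists_sep (n : ℕ) (z : List Bool → Cantor) :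
    ∃ m, ∀ a b : List Bool, a.length = n → b.length = n → splitLevel (z a) (z b) < m := by
  have hfin := (finite_length n).prod (finite_length n)
  obtain ⟨m, hm⟩ := (hfin.image fun p => splitLevel (z p.1) (z p.2)).bddAbove
  refine ⟨m + 1, fun a b ha hb => Nat.lt_succ_of_le (hm ⟨(a, b), ⟨ha, hb⟩, rfl⟩)⟩

/-- **Fusion.** If every finite approximation satisfying `RQ` can be split into a finer one, some
embedding `φ` passes through approximations all satisfying `RQ`. -/
theorem fusion (RQ : ℕ → (List Bool → Cantor) → ℕ → Prop) (z0 : List Bool → Cantor) (m0 : ℕ)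
    (h0 : RQ 0 z0 m0)
    (ext : ∀ n z m, Apart n z m → RQ n z m → ∃ z', Split n z m z' ∧
      ∃ m', ∀ m'' ≥ m', RQ (n + 1) z' m'') :
    ∃ φ, Emb φ ∧ ∃ (z : ℕ → List Bool → Cantor) (m : ℕ → ℕ),
      (∀ n, Apart n (z n) (m n) ∧ RQ n (z n) (m n)) ∧
      ∀ x n, Agr (m n) (φ x) (z n (restr x n)) := by
  have step : ∀ n (p : (List Bool → Cantor) × ℕ), ∃ q : (List Bool → Cantor) × ℕ,
      Apart n p.1 p.2 → RQ n p.1 p.2 → (Apart (n + 1) q.1 q.2 ∧ RQ (n + 1) q.1 q.2) ∧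
        Split n p.1 p.2 q.1 ∧ p.2 < q.2 := by
    intro n p
    by_cases h : Apart n p.1 p.2 ∧ RQ n p.1 p.2
    · obtain ⟨z', hz', m', hm'⟩ := ext n p.1 p.2 h.1 h.2
      obtain ⟨k, hk⟩ := exists_sep (n + 1) z'
      refine ⟨(z', max (max m' k) (p.2 + 1)), fun _ _ => ⟨⟨?_, hm' _ ?_⟩, hz', ?_⟩⟩
      · intro a b ha hb hab
        refine not_agr_of_lt (hz'.ne h.1 ha hb hab) ((hk a b ha hb).trans_le ?_)
        exact (le_max_right m' k).trans (le_max_left _ _)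
      · exact (le_max_left m' k).trans (le_max_left _ _)
      · exact lt_of_lt_of_le (Nat.lt_succ_self _) (le_max_right _ _)
    · exact ⟨p, fun h1 h2 => absurd ⟨h1, h2⟩ h⟩
  choose F hF using step
  set st : ℕ → (List Bool → Cantor) × ℕ := fun n => Nat.rec (z0, m0) F n with hst
  have hsts : ∀ n, st (n + 1) = F n (st n) := fun n => rfl
  have hgood : ∀ n, Apart n (st n).1 (st n).2 ∧ RQ n (st n).1 (st n).2 := by
    intro n
    induction n with
    | zero =>
      refine ⟨fun a b ha hb hab => absurd ?_ hab, h0⟩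
      rw [List.length_eq_zero_iff.1 ha, List.length_eq_zero_iff.1 hb]
    | succ n ih => rw [hsts]; exact (hF n (st n) ih.1 ih.2).1
  have hsplit : ∀ n, Split n (st n).1 (st n).2 (st (n + 1)).1 := fun n => by
    rw [hsts]; exact (hF n (st n) (hgood n).1 (hgood n).2).2.1
  have hlt : ∀ n, (st n).2 < (st (n + 1)).2 := fun n => by
    rw [hsts]; exact (hF n (st n) (hgood n).1 (hgood n).2).2.2
  set z := fun n => (st n).1 with hz
  set m := fun n => (st n).2 with hm
  have hmono : StrictMono m := strictMono_nat_of_lt_succ hlt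
  have hchain : ∀ x n j, n ≤ j → Agr (m n) (z n (restr x n)) (z j (restr x j)) := by
    intro x n j hnj
    induction j, hnj using Nat.le_induction with
    | base => exact Agr.refl _ _
    | succ j hj ih =>
      refine ih.trans ?_
      rw [restr_succ]
      exact ((hsplit j).agr (length_restr x j) (x j)).mono (hmono.monotone hj)
  -- The precisions increase strictly, so coordinate `k` is decided at stage `k + 1`.
  set φ : Cantor → Cantor := fun x k => z (k + 1) (restr x (k + 1)) k with hφ
  have hagr : ∀ x n, Agr (m n) (φ x) (z n (restr x n)) := by
    intro x n k hk
    rcases le_total n (k + 1) with h | h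
    · exact (hchain x n (k + 1) h k hk).symm
    · exact hchain x (k + 1) n h k (lt_of_lt_of_le (Nat.lt_succ_self k) (hmono.le_apply))
  have hnot : ∀ x y n, ¬ Agr n x y → ¬ Agr (m n) (φ x) (φ y) := by
    intro x y n hn h
    refine (hgood n).1 _ _ (length_restr x n) (length_restr y n) (fun e => hn (restr_eq_iff.1 e)) ?_
    exact ((hagr x n).symm.trans h).trans (hagr y n)
  have hyes : ∀ x y n, Agr n x y → Agr (m n) (φ x) (φ y) := by
    intro x y n h
    have := hagr y n
    rw [← restr_eq_iff.2 h] at this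
    exact (hagr x n).trans this.symm
  have hpair : ∀ x y, clex x y →
      let s := restr x (splitLevel x y)
      let u := z (splitLevel x y + 1) (s ++ [false])
      let v := z (splitLevel x y + 1) (s ++ [true])
      clex u v ∧ Agr (m (splitLevel x y + 1)) u (φ x) ∧ Agr (m (splitLevel x y + 1)) v (φ y) ∧
        splitLevel u v < m (splitLevel x y + 1) := by
    intro x y hxy s u v
    have hx := hagr x (splitLevel x y + 1)
    have hy := hagr y (splitLevel x y + 1)
    rw [restr_succ, clex_false hxy] at hx
    rw [restr_succ, clex_true hxy, ← restr_eq_iff.2 (agr_splitLevel x y)] at hy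
    refine ⟨(hsplit _ s (length_restr _ _)).2.2, hx.symm, hy.symm, ?_⟩
    exact splitLevel_lt_of_not_agr ((hgood _).1 (s ++ [false]) (s ++ [true])
      (by rw [List.length_append, length_restr, List.length_singleton])
      (by rw [List.length_append, length_restr, List.length_singleton]) (by simp))
  have hmonoφ : ∀ x y, clex x y → clex (φ x) (φ y) := fun x y h =>
    clex_stable (hpair x y h).1 (hpair x y h).2.2.2 (hpair x y h).2.1 (hpair x y h).2.2.1
  have hub : ∀ x y, x ≠ y → splitLevel (φ x) (φ y) < m (splitLevel x y + 1) := fun x y h =>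
    splitLevel_lt_of_not_agr (hnot x y _ (not_agr_of_lt h (Nat.lt_succ_self _)))
  have hlb : ∀ x y, clex x y → m (splitLevel x y) ≤ splitLevel (φ x) (φ y) := fun x y h =>
    (hyes x y _ (agr_splitLevel x y)).le_splitLevel (hmonoφ x y h).1
  refine ⟨φ, ⟨fun k => ⟨k, fun x x' h => ?_⟩, hmonoφ, ?_⟩, z, m, hgood, hagr⟩
  · exact (hyes x x' k h).mono hmono.le_apply
  · intro x y x' y' h h'
    constructor
    · rintro ⟨hl, ha⟩
      have e : splitLevel x y = splitLevel x' y' := by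
        have h1 := hub x y h.1
        have h2 := hub x' y' h'.1
        have h3 := hlb x y h
        have h4 := hlb x' y' h'
        rw [← hl] at h2 h4
        have h5 : splitLevel x y < splitLevel x' y' + 1 := hmono.lt_iff_lt.1 (h3.trans_lt h2)
        have h6 : splitLevel x' y' < splitLevel x y + 1 := hmono.lt_iff_lt.1 (h4.trans_lt h1)
        omega
      refine ⟨e, ?_⟩
      by_contra hn
      exact hnot x x' _ hn (ha.mono (hlb x y h))
    · rintro ⟨e, ha⟩
      have p := hpair x y h
      have p' := hpair x' y' h'
      rw [← e, ← restr_eq_iff.2 ha] at p'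
      exact (SM_stable p.1.1 p.2.2.2 p.2.1 p.2.2.1).symm.trans
        (SM_stable p'.1.1 p'.2.2.2 p'.2.1 p'.2.2.1)

/-- Pairs in the range of an embedding obtained by fusion branch as the nodes they pass through. -/
theorem Emb.clex_node {φ : Cantor → Cantor} (hφ : Emb φ) {n m : ℕ} {z : List Bool → Cantor}
    (hA : Apart n z m) (hagr : ∀ x, Agr m (φ x) (z (restr x n))) {x y : Cantor} (h : clex x y)
    (hn : splitLevel x y < n) : clex (z (restr x n)) (z (restr y n)) ∧
      SM (z (restr x n)) (z (restr y n)) (φ x) (φ y) := by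
  have hne : restr x n ≠ restr y n := fun e => not_agr_of_lt h.1 hn (restr_eq_iff.1 e)
  have := clex_of_agr (hA _ _ (length_restr x n) (length_restr y n) hne) (hagr x).symm
    (hagr y).symm (hφ.mono _ _ h)
  exact ⟨this.1, this.2.1⟩

/-! ### Canonical maps, restrictions and boxes -/

/-- Inequality of two values of `C` is witnessed by finitely many coordinates of the arguments. -/
def SepC {M : Type*} (C : Cantor → Cantor → M) : Prop :=
  ∀ x y x' y', clex x y → clex x' y' → C x y ≠ C x' y' →
    ∃ m, ∀ X Y X' Y', Agr m x X → Agr m y Y → Agr m x' X' → Agr m y' Y' → C X Y ≠ C X' Y'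

/-- On the range of some embedding, the kernel of `C` is one of the canonical equivalence
relations. The propositions `i0`, `i1`, `j` say whether the first point, the second point, and the
meet of the pair are determined by the value. -/
def Canon {M : Type*} (C : Cantor → Cantor → M) : Prop :=
  ∃ φ, Emb φ ∧ ∃ i0 i1 j : Prop, (i0 → i1 → ¬ j) ∧ ∀ x y x' y', clex x y → clex x' y' →
    (C (φ x) (φ y) = C (φ x') (φ y') ↔ (i0 → x = x') ∧ (i1 → y = y') ∧ (j → SM x y x' y'))

theorem Canon.of_comp {M : Type*} {C : Cantor → Cantor → M} {ψ : Cantor → Cantor} (hψ : Emb ψ)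
    (h : Canon fun x y => C (ψ x) (ψ y)) : Canon C := by
  obtain ⟨φ, hφ, i0, i1, j, hij, hC⟩ := h
  exact ⟨ψ ∘ φ, hψ.comp hφ, i0, i1, j, hij, hC⟩

theorem SepC.comp {M : Type*} {C : Cantor → Cantor → M} (hC : SepC C) {ψ : Cantor → Cantor}
    (hψ : Emb ψ) : SepC fun x y => C (ψ x) (ψ y) := by
  intro x y x' y' h h' hne
  obtain ⟨m, hm⟩ := hC _ _ _ _ (hψ.mono _ _ h) (hψ.mono _ _ h') hne
  obtain ⟨k, hk⟩ := hψ.cont m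
  exact ⟨k, fun X Y X' Y' h1 h2 h3 h4 =>
    hm _ _ _ _ (hk _ _ h1) (hk _ _ h2) (hk _ _ h3) (hk _ _ h4)⟩

/-- The first `m` coordinates of `u`, followed by `x`. -/
def pre (u : Cantor) (m : ℕ) (x : Cantor) : Cantor := fun k => if k < m then u k else x (k - m)

theorem pre_agr (u : Cantor) (m : ℕ) (x : Cantor) : Agr m u (pre u m x) := fun k hk => by
  simp [pre, hk]

theorem pre_add (u : Cantor) (m : ℕ) (x : Cantor) (k : ℕ) : pre u m x (k + m) = x k := by
  simp [pre]

theorem agr_pre_iff {u : Cantor} {m k : ℕ} {x y : Cantor} :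
    Agr (k + m) (pre u m x) (pre u m y) ↔ Agr k x y := by
  constructor
  · intro h i hi
    have := h (i + m) (by omega)
    rwa [pre_add, pre_add] at this
  · intro h i hi
    by_cases him : i < m
    · simp [pre, him]
    · simp only [pre, him, if_false]
      exact h _ (by omega)

theorem agr_pre_exists {u : Cantor} {m k : ℕ} {x X : Cantor} (h : Agr (k + m) (pre u m x) X) :
    ∃ X0, X = pre u m X0 ∧ Agr k x X0 := by
  refine ⟨fun i => X (i + m), ?_, ?_⟩
  · funext i
    by_cases him : i < m
    · rw [← h i (by omega)]; simp [pre, him]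
    · simp only [pre, him, if_false]
      congr 1
      omega
  · intro i hi
    have := h (i + m) (by omega)
    rwa [pre_add] at this

theorem splitLevel_pre {u : Cantor} {m : ℕ} {x y : Cantor} (h : x ≠ y) :
    splitLevel (pre u m x) (pre u m y) = splitLevel x y + m :=
  splitLevel_eq (agr_pre_iff.2 (agr_splitLevel x y)) (by
    rw [pre_add, pre_add]; exact splitLevel_ne h)

theorem clex_pre {u : Cantor} {m : ℕ} {x y : Cantor} (h : clex x y) :
    clex (pre u m x) (pre u m y) :=
  clex_iff.2 ⟨splitLevel x y + m, agr_pre_iff.2 (agr_splitLevel x y),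
    by rw [pre_add]; exact clex_false h, by rw [pre_add]; exact clex_true h⟩

theorem emb_pre (u : Cantor) (m : ℕ) : Emb (pre u m) where
  cont := fun k => ⟨k, fun x x' h => (agr_pre_iff.2 h).mono (Nat.le_add_right k m)⟩
  mono := fun _ _ h => clex_pre h
  sm := fun x y x' y' h h' => by
    unfold SM
    rw [splitLevel_pre h.1, splitLevel_pre h'.1, agr_pre_iff]
    simp

/-- `x`, `y` and `k` span a box of pairs inside the basic open set given by `u` and `m`, and `P`
holds of it. -/
def BoxIn (P : Cantor → Cantor → ℕ → Prop) (u : Cantor) (m : ℕ) (x y : Cantor) (k : ℕ) : Prop :=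
  Agr m u x ∧ Agr m u y ∧ clex x y ∧ splitLevel x y < k ∧ P x y k

/-- Boxes with property `P` exist inside every basic open subset of that given by `u0`, `m0`. -/
def DenseBox (P : Cantor → Cantor → ℕ → Prop) (u0 : Cantor) (m0 : ℕ) : Prop :=
  ∀ u m, Agr m0 u0 u → m0 ≤ m → ∃ x y k, BoxIn P u m x y k

/-- No box inside the basic open set given by `u`, `m` has property `P`. -/
def NoBox (P : Cantor → Cantor → ℕ → Prop) (u : Cantor) (m : ℕ) : Prop :=
  ∀ x y k, ¬ BoxIn P u m x y k

theorem exists_noBox {P : Cantor → Cantor → ℕ → Prop} {u0 : Cantor} {m0 : ℕ}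
    (h : ¬ DenseBox P u0 m0) : ∃ u m, Agr m0 u0 u ∧ m0 ≤ m ∧ NoBox P u m := by
  unfold DenseBox at h
  push Not at h
  exact h

theorem NoBox.mono {P : Cantor → Cantor → ℕ → Prop} {u u' : Cantor} {m m' : ℕ}
    (h : NoBox P u m) (hu : Agr m u u') (hm : m ≤ m') : NoBox P u' m' :=
  fun x y k hb => h x y k ⟨hu.trans (hb.1.mono hm), hu.trans (hb.2.1.mono hm), hb.2.2⟩

/-- Finitely many properties that are nowhere densely realized by boxes can be avoided at once. -/
theorem avoid {ι : Type*} (P : ι → Cantor → Cantor → ℕ → Prop) {S : Set ι} (hS : S.Finite)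
    (h : ∀ i ∈ S, ∀ u m, ¬ DenseBox (P i) u m) (u : Cantor) (m : ℕ) :
    ∃ u' m', Agr m u u' ∧ m ≤ m' ∧ ∀ i ∈ S, NoBox (P i) u' m' := by
  induction S, hS using Set.Finite.induction_on with
  | empty => exact ⟨u, m, Agr.refl _ _, le_rfl, fun i hi => absurd hi (notMem_empty i)⟩
  | @insert i S _ _ ih =>
    obtain ⟨u', m', hu, hm, hb⟩ := ih fun i hi => h i (mem_insert_of_mem _ hi)
    obtain ⟨u'', m'', hu', hm', hb'⟩ := exists_noBox (h i (mem_insert _ _) u' m')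
    refine ⟨u'', m'', hu.trans (hu'.mono hm), hm.trans hm', ?_⟩
    rintro j (rfl | hj)
    · exact hb'
    · exact (hb j hj).mono hu' hm'

/-- If boxes with property `P` are dense, some embedding sends each set of pairs with a common meet
into a single such box. -/
theorem exists_emb_of_denseBox {P : Cantor → Cantor → ℕ → Prop}
    (hP : ∀ x y k k', k ≤ k' → P x y k → P x y k') {u0 : Cantor} {m0 : ℕ}
    (h : DenseBox P u0 m0) :
    ∃ φ, Emb φ ∧ ∀ x y, clex x y → ∃ X Y k, P X Y k ∧
      ∀ x' y', clex x' y' → SM x y x' y' → Agr k X (φ x') ∧ Agr k Y (φ y') := by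
  obtain ⟨φ, hφ, z, m, hz, hagr⟩ := fusion
    (fun n z m => m0 ≤ m ∧ (∀ s : List Bool, s.length = n → Agr m0 u0 (z s)) ∧
      ∀ s : List Bool, s.length + 1 = n → P (z (s ++ [false])) (z (s ++ [true])) m)
    (fun _ => u0) m0 ⟨le_rfl, fun _ _ => Agr.refl _ _, fun s hs => absurd hs (by omega)⟩
    (by
      rintro n z m - ⟨hm, hz, -⟩
      have : ∀ s : List Bool, ∃ x y k, s.length = n → BoxIn P (z s) m x y k := by
        intro s
        by_cases hs : s.length = n
        · obtain ⟨x, y, k, hb⟩ := h (z s) m (hz s hs) hm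
          exact ⟨x, y, k, fun _ => hb⟩
        · exact ⟨u0, u0, 0, fun h => absurd h hs⟩
      choose x y k hb using this
      obtain ⟨z', hz'⟩ := exists_join x y
      refine ⟨z', fun s hs => ?_, ?_⟩
      · rw [(hz' s).1, (hz' s).2]
        exact ⟨(hb s hs).1, (hb s hs).2.1, (hb s hs).2.2.1⟩
      · obtain ⟨K, hK⟩ := ((finite_length n).image k).bddAbove
        refine ⟨max K m0, fun m'' hm'' => ⟨(le_max_right _ _).trans hm'', ?_, ?_⟩⟩
        · intro a ha
          obtain ⟨s, i, hs, rfl⟩ := exists_snoc ha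
          refine (hz s hs).trans ?_
          cases i
          · rw [(hz' s).1]; exact (hb s hs).1.mono hm
          · rw [(hz' s).2]; exact (hb s hs).2.1.mono hm
        · intro s hs
          have hs : s.length = n := by omega
          rw [(hz' s).1, (hz' s).2]
          exact hP _ _ _ _ ((hK ⟨s, hs, rfl⟩).trans ((le_max_left _ _).trans hm''))
            (hb s hs).2.2.2.2)
  refine ⟨φ, hφ, fun x y hxy => ?_⟩
  refine ⟨_, _, m (splitLevel x y + 1),
    (hz (splitLevel x y + 1)).2.2.2 (restr x (splitLevel x y)) (by rw [length_restr]), ?_⟩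
  intro x' y' h' hsm
  have h1 := hagr x' (splitLevel x' y' + 1)
  have h2 := hagr y' (splitLevel x' y' + 1)
  rw [restr_succ, clex_false h'] at h1
  rw [restr_succ, clex_true h', ← restr_eq_iff.2 (agr_splitLevel x' y')] at h2
  rw [← hsm.1, ← restr_eq_iff.2 hsm.2] at h1 h2
  exact ⟨h1.symm, h2.symm⟩

/-! ### Fusion towards a canonical map, and perturbations -/

/-- The pairs of nodes `(a, b)` and `(a', b')` are identified by the canonical equivalence relation
with parameters `i0`, `i1`, `j`, where meets are computed with the points `z`. -/
def Lab (i0 i1 j : Prop) (z : List Bool → Cantor) (a b a' b' : List Bool) : Prop :=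
  (i0 → a = a') ∧ (i1 → b = b') ∧ (j → SM (z a) (z b) (z a') (z b'))

/-- At the points attached to the nodes of length `n`, equal values of `C` occur only where the
canonical equivalence relation requires them. -/
def Good {M : Type*} (C : Cantor → Cantor → M) (i0 i1 j : Prop) (n : ℕ)
    (z : List Bool → Cantor) : Prop :=
  ∀ a b a' b' : List Bool, a.length = n → b.length = n → a'.length = n → b'.length = n →
    clex (z a) (z b) → clex (z a') (z b') → C (z a) (z b) = C (z a') (z b') →
      Lab i0 i1 j z a b a' b'

/-- `Good` holds robustly: for all points that agree with the given ones up to precision `m`. -/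
def GoodAt {M : Type*} (C : Cantor → Cantor → M) (i0 i1 j : Prop) (n : ℕ)
    (z : List Bool → Cantor) (m : ℕ) : Prop :=
  ∀ a b a' b' : List Bool, a.length = n → b.length = n → a'.length = n → b'.length = n →
    clex (z a) (z b) → clex (z a') (z b') → ∀ X Y X' Y', Agr m (z a) X → Agr m (z b) Y →
      Agr m (z a') X' → Agr m (z b') Y' → C X Y = C X' Y' → Lab i0 i1 j z a b a' b'

theorem Good.eventually {M : Type*} {C : Cantor → Cantor → M} {i0 i1 j : Prop} {n : ℕ}
    {z : List Bool → Cantor} (hS : SepC C) (h : Good C i0 i1 j n z) :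
    ∃ m', ∀ m'' ≥ m', GoodAt C i0 i1 j n z m'' := by
  have hfin := ((finite_length n).prod (finite_length n)).prod
    ((finite_length n).prod (finite_length n))
  have key : ∀ t : (List Bool × List Bool) × (List Bool × List Bool), ∃ m,
      t.1.1.length = n → t.1.2.length = n → t.2.1.length = n → t.2.2.length = n →
      clex (z t.1.1) (z t.1.2) → clex (z t.2.1) (z t.2.2) → ∀ X Y X' Y', Agr m (z t.1.1) X →
      Agr m (z t.1.2) Y → Agr m (z t.2.1) X' → Agr m (z t.2.2) Y' → C X Y = C X' Y' →
      Lab i0 i1 j z t.1.1 t.1.2 t.2.1 t.2.2 := by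
    rintro ⟨⟨a, b⟩, ⟨a', b'⟩⟩
    by_cases hc : clex (z a) (z b) ∧ clex (z a') (z b') ∧ C (z a) (z b) ≠ C (z a') (z b')
    · obtain ⟨m, hm⟩ := hS _ _ _ _ hc.1 hc.2.1 hc.2.2
      exact ⟨m, fun _ _ _ _ _ _ X Y X' Y' h1 h2 h3 h4 he => absurd he (hm X Y X' Y' h1 h2 h3 h4)⟩
    · refine ⟨0, fun ha hb ha' hb' h1 h2 _ _ _ _ _ _ _ _ _ => h a b a' b' ha hb ha' hb' h1 h2 ?_⟩
      by_contra he
      exact hc ⟨h1, h2, he⟩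
  choose f hf using key
  obtain ⟨K, hK⟩ := (hfin.image f).bddAbove
  refine ⟨K, fun m'' hm'' a b a' b' ha hb ha' hb' h1 h2 X Y X' Y' hX hY hX' hY' he => ?_⟩
  have hle : f ((a, b), (a', b')) ≤ m'' := (hK ⟨((a, b), (a', b')), ⟨⟨ha, hb⟩, ⟨ha', hb'⟩⟩, rfl⟩).trans hm''
  exact hf ((a, b), (a', b')) ha hb ha' hb' h1 h2 X Y X' Y' (hX.mono hle) (hY.mono hle)
    (hX'.mono hle) (hY'.mono hle) he

/-- If the canonical equivalence relation with parameters `i0`, `i1`, `j` is contained in the kernel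
of `C`, and approximations that respect it can always be refined, then `C` is canonical. -/
theorem canon_of_ext {M : Type*} {C : Cantor → Cantor → M} (hS : SepC C) (i0 i1 j : Prop)
    (hij : i0 → i1 → ¬ j)
    (hE : ∀ x y x' y', clex x y → clex x' y' → (i0 → x = x') → (i1 → y = y') →
      (j → SM x y x' y') → C x y = C x' y')
    (ext : ∀ n z m, Apart n z m → GoodAt C i0 i1 j n z m → ∃ z', Split n z m z' ∧
      Good C i0 i1 j (n + 1) z') : Canon C := by
  obtain ⟨φ, hφ, z, m, hz, hagr⟩ := fusion (GoodAt C i0 i1 j) (fun _ => fun _ => false) 0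
    (fun a b a' b' ha hb _ _ h => absurd (by
      rw [List.length_eq_zero_iff.1 ha, List.length_eq_zero_iff.1 hb]) h.1)
    (fun n z m hA hG => by
      obtain ⟨z', h1, h2⟩ := ext n z m hA hG
      exact ⟨z', h1, h2.eventually hS⟩)
  refine ⟨φ, hφ, i0, i1, j, hij, fun x y x' y' h h' => ⟨fun he => ?_, fun he =>
    hE _ _ _ _ (hφ.mono _ _ h) (hφ.mono _ _ h') (fun i => by rw [he.1 i])
      (fun i => by rw [he.2.1 i]) (fun i => (hφ.sm _ _ _ _ h h').2 (he.2.2 i))⟩⟩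
  have main : ∀ n, splitLevel x y < n → splitLevel x' y' < n → Lab i0 i1 j (z n) (restr x n)
      (restr y n) (restr x' n) (restr y' n) ∧ (j → SM x y x' y') := by
    intro n hn hn'
    have lem := fun x y => hφ.clex_node (x := x) (y := y) (hz n).1 fun x => hagr x n
    have hl := (hz n).2 _ _ _ _ (length_restr x n) (length_restr y n) (length_restr x' n)
      (length_restr y' n) (lem x y h hn).1 (lem x' y' h' hn').1 _ _ _ _ (hagr x n).symm
      (hagr y n).symm (hagr x' n).symm (hagr y' n).symm he
    refine ⟨hl, fun i => (hφ.sm _ _ _ _ h h').1 ?_⟩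
    exact ((lem x y h hn).2.symm.trans (hl.2.2 i)).trans (lem x' y' h' hn').2
  have fin : ∀ u v : Cantor, (∀ n, splitLevel x y < n → splitLevel x' y' < n →
      restr u n = restr v n) → u = v := by
    intro u v huv
    funext k
    have := huv (max k (max (splitLevel x y) (splitLevel x' y')) + 1) (by omega) (by omega)
    exact restr_eq_iff.1 this k (by omega)
  exact ⟨fun i => fin _ _ fun n hn hn' => (main n hn hn').1.1 i,
    fun i => fin _ _ fun n hn hn' => (main n hn hn').1.2.1 i,
    (main (max (splitLevel x y) (splitLevel x' y') + 1) (by omega) (by omega)).2⟩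

/-- Finitely many conditions, each stable under small perturbations and achievable by arbitrarily
small perturbations, can be met simultaneously by a small perturbation. -/
theorem perturb {ι : Type*} (cond : ι → (List Bool → Cantor) → Prop) {S : Set ι} (hS : S.Finite)
    (z0 : List Bool → Cantor) (m0 : ℕ)
    (ho : ∀ i ∈ S, ∀ z : List Bool → Cantor, (∀ s, Agr m0 (z0 s) (z s)) → cond i z →
      ∃ m, ∀ w : List Bool → Cantor, (∀ s, Agr m (z s) (w s)) → cond i w)
    (hd : ∀ i ∈ S, ∀ z : List Bool → Cantor, (∀ s, Agr m0 (z0 s) (z s)) → ∀ m ≥ m0,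
      ∃ w : List Bool → Cantor, (∀ s, Agr m (z s) (w s)) ∧ cond i w) :
    ∃ w : List Bool → Cantor, (∀ s, Agr m0 (z0 s) (w s)) ∧ ∀ i ∈ S, cond i w := by
  suffices h : ∃ (w : List Bool → Cantor) (m : ℕ), m0 ≤ m ∧ (∀ s, Agr m0 (z0 s) (w s)) ∧
      ∀ w' : List Bool → Cantor, (∀ s, Agr m (w s) (w' s)) → ∀ i ∈ S, cond i w' by
    obtain ⟨w, m, -, hw, h⟩ := h
    exact ⟨w, hw, h w fun s => Agr.refl _ _⟩
  induction S, hS using Set.Finite.induction_on with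
  | empty => exact ⟨z0, m0, le_rfl, fun _ => Agr.refl _ _, fun _ _ i hi => absurd hi (notMem_empty i)⟩
  | @insert i S _ _ ih =>
    obtain ⟨w, m, hm, hw, h⟩ := ih (fun i hi => ho i (mem_insert_of_mem _ hi))
      (fun i hi => hd i (mem_insert_of_mem _ hi))
    obtain ⟨v, hv, hcv⟩ := hd i (mem_insert _ _) w hw m hm
    have hv0 : ∀ s, Agr m0 (z0 s) (v s) := fun s => (hw s).trans ((hv s).mono hm)
    obtain ⟨k, hk⟩ := ho i (mem_insert _ _) v hv0 hcv
    refine ⟨v, max k m, hm.trans (le_max_right _ _), hv0, fun w' hw' => ?_⟩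
    rintro j (rfl | hj)
    · exact hk w' fun s => (hw' s).mono (le_max_left _ _)
    · exact h w' (fun s => (hv s).trans ((hw' s).mono (le_max_right _ _))) j hj

/-- Distinct points attached to nodes can be perturbed so as to be `Good`, provided that no
undesired equality between two values of `C` persists under all small perturbations. -/
theorem exists_good {M : Type*} {C : Cantor → Cantor → M} (hS : SepC C) (i0 i1 j : Prop) (N : ℕ)
    (z0 : List Bool → Cantor) (m : ℕ)
    (hd : ∀ (z : List Bool → Cantor) (k : ℕ), (∀ s, Agr m (z0 s) (z s)) →
      (∀ a b : List Bool, a.length = N → b.length = N → splitLevel (z a) (z b) < k) →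
      ∀ a b a' b' : List Bool, a.length = N → b.length = N → a'.length = N → b'.length = N →
      clex (z a) (z b) → clex (z a') (z b') →
      (∀ w : List Bool → Cantor, (∀ s, Agr k (z s) (w s)) → C (w a) (w b) = C (w a') (w b')) →
      Lab i0 i1 j z a b a' b')
    (hne : ∀ a b : List Bool, a.length = N → b.length = N → a ≠ b → z0 a ≠ z0 b) :
    ∃ w : List Bool → Cantor, (∀ s, Agr m (z0 s) (w s)) ∧
      (∀ a b : List Bool, a.length = N → b.length = N → clex (z0 a) (z0 b) →
        clex (w a) (w b)) ∧ Good C i0 i1 j N w := by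
  obtain ⟨k0, hk0⟩ := exists_sep N z0
  set m0 := max m k0 with hm0
  have hk0' : ∀ a b : List Bool, a.length = N → b.length = N → splitLevel (z0 a) (z0 b) < m0 :=
    fun a b ha hb => (hk0 a b ha hb).trans_le (le_max_right _ _)
  have st : ∀ z : List Bool → Cantor, (∀ s, Agr m0 (z0 s) (z s)) → ∀ a b : List Bool,
      a.length = N → b.length = N → a ≠ b → (clex (z0 a) (z0 b) ↔ clex (z a) (z b)) ∧ SM (z0 a) (z0 b) (z a) (z b) := by
    intro z hz a b ha hb hab
    have h1 := hne a b ha hb hab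
    have h2 := hk0' a b ha hb
    have h3 := splitLevel_stable h1 h2 (hz a) (hz b)
    exact ⟨⟨fun h => clex_stable h h2 (hz a) (hz b),
      fun h => clex_stable h (h3 ▸ h2) (hz a).symm (hz b).symm⟩, SM_stable h1 h2 (hz a) (hz b)⟩
  have hfin : {t : (List Bool × List Bool) × (List Bool × List Bool) |
      (t.1.1.length = N ∧ t.1.2.length = N ∧ t.2.1.length = N ∧ t.2.2.length = N) ∧
      clex (z0 t.1.1) (z0 t.1.2) ∧ clex (z0 t.2.1) (z0 t.2.2) ∧
      ¬ Lab i0 i1 j z0 t.1.1 t.1.2 t.2.1 t.2.2}.Finite :=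
    (((finite_length N).prod (finite_length N)).prod
      ((finite_length N).prod (finite_length N))).subset
      fun t ht => ⟨⟨ht.1.1, ht.1.2.1⟩, ⟨ht.1.2.2.1, ht.1.2.2.2⟩⟩
  have hneq : ∀ {z : List Bool → Cantor} {a b : List Bool}, clex (z a) (z b) → a ≠ b := by
    rintro z a b h rfl
    exact h.1 rfl
  have lab : ∀ z : List Bool → Cantor, (∀ s, Agr m0 (z0 s) (z s)) → ∀ a b a' b' : List Bool,
      a.length = N → b.length = N → a'.length = N → b'.length = N → a ≠ b → a' ≠ b' →
      (Lab i0 i1 j z a b a' b' ↔ Lab i0 i1 j z0 a b a' b') := by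
    intro z hz a b a' b' ha hb ha' hb' hab hab'
    have s1 := (st z hz a b ha hb hab).2
    have s2 := (st z hz a' b' ha' hb' hab').2
    exact and_congr Iff.rfl (and_congr Iff.rfl (imp_congr Iff.rfl
      ⟨fun h => (s1.trans h).trans s2.symm, fun h => (s1.symm.trans h).trans s2⟩))
  obtain ⟨w, hw, hcw⟩ := perturb
    (fun (t : (List Bool × List Bool) × (List Bool × List Bool)) (z : List Bool → Cantor) =>
      C (z t.1.1) (z t.1.2) ≠ C (z t.2.1) (z t.2.2)) hfin z0 m0
    (by
      rintro ⟨⟨a, b⟩, ⟨a', b'⟩⟩ ⟨⟨ha, hb, ha', hb'⟩, h1, h2, -⟩ z hz hc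
      obtain ⟨k, hk⟩ := hS _ _ _ _ ((st z hz a b ha hb (hneq h1)).1.1 h1)
        ((st z hz a' b' ha' hb' (hneq h2)).1.1 h2) hc
      exact ⟨k, fun w hw => hk _ _ _ _ (hw a) (hw b) (hw a') (hw b')⟩)
    (by
      rintro ⟨⟨a, b⟩, ⟨a', b'⟩⟩ ⟨⟨ha, hb, ha', hb'⟩, h1, h2, hL⟩ z hz k hk
      by_contra hcon
      push Not at hcon
      obtain ⟨k1, hk1⟩ := exists_sep N z
      refine hL ((lab z hz a b a' b' ha hb ha' hb' (hneq h1) (hneq h2)).1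
        (hd z (max k k1) (fun s => (hz s).mono (le_max_left _ _))
          (fun a b ha hb => (hk1 a b ha hb).trans_le (le_max_right _ _)) a b a' b' ha hb ha' hb'
          ((st z hz a b ha hb (hneq h1)).1.1 h1) ((st z hz a' b' ha' hb' (hneq h2)).1.1 h2) ?_))
      exact fun w hw => hcon w fun s => (hw s).mono (le_max_left _ _))
  refine ⟨w, fun s => (hw s).mono (le_max_left _ _),
    fun a b ha hb h => (st w hw a b ha hb (hneq h)).1.1 h, ?_⟩
  intro a b a' b' ha hb ha' hb' h1 h2 he
  have h1' := (st w hw a b ha hb (hneq h1)).1.2 h1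
  have h2' := (st w hw a' b' ha' hb' (hneq h2)).1.2 h2
  rw [lab w hw a b a' b' ha hb ha' hb' (hneq h1) (hneq h2)]
  by_contra hL
  exact hcw ((a, b), (a', b')) ⟨⟨ha, hb, ha', hb'⟩, h1', h2', hL⟩ he

/-! ### Boxes on which a map depends on fewer variables -/

/-- On the box given by `x`, `y`, `k`, the value of `C` does not depend on the first variable. -/
def XI {M : Type*} (C : Cantor → Cantor → M) (x y : Cantor) (k : ℕ) : Prop :=
  ∀ X X' Y, Agr k x X → Agr k x X' → Agr k y Y → C X Y = C X' Y

/-- On the box given by `x`, `y`, `k`, the value of `C` does not depend on the second variable. -/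
def YI {M : Type*} (C : Cantor → Cantor → M) (x y : Cantor) (k : ℕ) : Prop :=
  ∀ X Y Y', Agr k x X → Agr k y Y → Agr k y Y' → C X Y = C X Y'

/-- On the box given by `x`, `y`, `k`, the value of `C` is the function `g` of the first
variable. -/
def GI {M : Type*} (C : Cantor → Cantor → M) (g : Cantor → M) (x y : Cantor) (k : ℕ) : Prop :=
  ∀ X Y, Agr k x X → Agr k y Y → C X Y = g X

/-- `C` is constant on the box given by `x`, `y`, `k`. -/
def CI {M : Type*} (C : Cantor → Cantor → M) (x y : Cantor) (k : ℕ) : Prop :=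
  ∀ X Y X' Y', Agr k x X → Agr k y Y → Agr k x X' → Agr k y Y' → C X Y = C X' Y'

/-- No box whatsoever has property `P`. -/
def NB (P : Cantor → Cantor → ℕ → Prop) : Prop :=
  ∀ x y k, clex x y → splitLevel x y < k → ¬ P x y k

theorem NoBox.pre {P P' : Cantor → Cantor → ℕ → Prop} {u : Cantor} {m : ℕ} (h : NoBox P u m)
    (ht : ∀ x y k, P' x y k → P (pre u m x) (pre u m y) (k + m)) : NB P' := by
  intro x y k hxy hk hP
  refine h (_root_.pre u m x) (_root_.pre u m y) (k + m) ⟨pre_agr u m x, pre_agr u m y,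
    clex_pre hxy, ?_, ht x y k hP⟩
  rw [splitLevel_pre hxy.1]
  omega

theorem NB.noBox {P : Cantor → Cantor → ℕ → Prop} (h : NB P) (u : Cantor) (m : ℕ) :
    NoBox P u m := fun x y k hb => h x y k hb.2.2.1 hb.2.2.2.1 hb.2.2.2.2

section Transfer

variable {M : Type*} {C : Cantor → Cantor → M} (u : Cantor) (m : ℕ)

theorem XI.pre (x y : Cantor) (k : ℕ) (h : XI (fun x y => C (pre u m x) (pre u m y)) x y k) :
    XI C (pre u m x) (pre u m y) (k + m) := by
  intro X X' Y hX hX' hY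
  obtain ⟨X, rfl, aX⟩ := agr_pre_exists hX
  obtain ⟨X', rfl, aX'⟩ := agr_pre_exists hX'
  obtain ⟨Y, rfl, aY⟩ := agr_pre_exists hY
  exact h X X' Y aX aX' aY

theorem YI.pre (x y : Cantor) (k : ℕ) (h : YI (fun x y => C (pre u m x) (pre u m y)) x y k) :
    YI C (pre u m x) (pre u m y) (k + m) := by
  intro X Y Y' hX hY hY'
  obtain ⟨X, rfl, aX⟩ := agr_pre_exists hX
  obtain ⟨Y, rfl, aY⟩ := agr_pre_exists hY
  obtain ⟨Y', rfl, aY'⟩ := agr_pre_exists hY'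
  exact h X Y Y' aX aY aY'

theorem CI.pre (x y : Cantor) (k : ℕ) (h : CI (fun x y => C (pre u m x) (pre u m y)) x y k) :
    CI C (pre u m x) (pre u m y) (k + m) := by
  intro X Y X' Y' hX hY hX' hY'
  obtain ⟨X, rfl, aX⟩ := agr_pre_exists hX
  obtain ⟨Y, rfl, aY⟩ := agr_pre_exists hY
  obtain ⟨X', rfl, aX'⟩ := agr_pre_exists hX'
  obtain ⟨Y', rfl, aY'⟩ := agr_pre_exists hY'
  exact h X Y X' Y' aX aY aX' aY'

end Transfer

/-- An equality between values at nodes that persists under perturbation, with `a` occurring on the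
left side only, makes the left side independent of the point at `a`. -/
theorem xi_of_persist {M : Type*} {C : Cantor → Cantor → M} {z : List Bool → Cantor} {k : ℕ}
    {a b a' b' : List Bool}
    (h : ∀ w : List Bool → Cantor, (∀ s, Agr k (z s) (w s)) → C (w a) (w b) = C (w a') (w b'))
    (hab : a ≠ b) (ha : a ≠ a') (hb : a ≠ b') : XI C (z a) (z b) k := by
  classical
  intro X X' Y hX hX' hY
  have key : ∀ X, Agr k (z a) X → C X Y =
      C (Function.update z b Y a') (Function.update z b Y b') := by
    intro X hX
    have := h (Function.update (Function.update z b Y) a X) fun s => by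
      by_cases h1 : s = a
      · subst h1; rwa [Function.update_self]
      · rw [Function.update_of_ne h1]
        by_cases h2 : s = b
        · subst h2; rwa [Function.update_self]
        · rw [Function.update_of_ne h2]; exact Agr.refl _ _
    rwa [Function.update_self, Function.update_of_ne hab.symm, Function.update_self,
      Function.update_of_ne ha.symm, Function.update_of_ne hb.symm] at this
  rw [key X hX, key X' hX']

theorem yi_of_persist {M : Type*} {C : Cantor → Cantor → M} {z : List Bool → Cantor} {k : ℕ}
    {a b a' b' : List Bool}
    (h : ∀ w : List Bool → Cantor, (∀ s, Agr k (z s) (w s)) → C (w a) (w b) = C (w a') (w b'))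
    (hab : b ≠ a) (ha : b ≠ a') (hb : b ≠ b') : YI C (z a) (z b) k :=
  fun X Y Y' hX hY hY' =>
    xi_of_persist (C := fun x y => C y x) (a := b) (b := a) (a' := b') (b' := a') h hab hb ha
      Y Y' X hY hY' hX

/-- If no box is independent of the first variable, the first node is determined by a persistent
value. -/
theorem fst_eq_of_persist {M : Type*} {C : Cantor → Cantor → M} {z : List Bool → Cantor} {k : ℕ}
    {a b a' b' : List Bool} (hX : NB (XI C))
    (h : ∀ w : List Bool → Cantor, (∀ s, Agr k (z s) (w s)) → C (w a) (w b) = C (w a') (w b'))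
    (hab : clex (z a) (z b)) (hab' : clex (z a') (z b')) (hk : splitLevel (z a) (z b) < k)
    (hk' : splitLevel (z a') (z b') < k) : a = a' := by
  have h1 : a ≠ b := by rintro rfl; exact hab.1 rfl
  have h2 : a' ≠ b' := by rintro rfl; exact hab'.1 rfl
  by_contra hne
  by_cases h3 : a = b'
  · subst h3
    by_cases h4 : a' = b
    · subst h4; exact clex_asymm hab hab'
    · exact hX _ _ _ hab' hk'
        (xi_of_persist (fun w hw => (h w hw).symm) h2 (Ne.symm hne) h4)
  · exact hX _ _ _ hab hk (xi_of_persist h h1 hne h3)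

/-- Every node can be split at a prescribed level. -/
theorem exists_split_levels (z : List Bool → Cantor) (l : List Bool → ℕ) :
    ∃ z' : List Bool → Cantor, ∀ s, Agr (l s) (z s) (z' (s ++ [false])) ∧
      Agr (l s) (z s) (z' (s ++ [true])) ∧ clex (z' (s ++ [false])) (z' (s ++ [true])) ∧
      splitLevel (z' (s ++ [false])) (z' (s ++ [true])) = l s := by
  obtain ⟨z', hz'⟩ := exists_join (fun s => Function.update (z s) (l s) false)
    (fun s => Function.update (z s) (l s) true)
  have hagr : ∀ s b, Agr (l s) (z s) (Function.update (z s) (l s) b) := fun s b k hk => by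
    rw [Function.update_of_ne hk.ne]
  refine ⟨z', fun s => ?_⟩
  rw [(hz' s).1, (hz' s).2]
  exact ⟨hagr s _, hagr s _, clex_iff.2 ⟨l s, (hagr s _).symm.trans (hagr s _), by simp, by simp⟩,
    splitLevel_eq ((hagr s _).symm.trans (hagr s _)) (by simp)⟩

theorem exists_split (z : List Bool → Cantor) (m : ℕ) : ∃ z', ∀ n, Split n z m z' := by
  obtain ⟨z', hz'⟩ := exists_split_levels z fun _ => m
  exact ⟨z', fun n s _ => ⟨(hz' s).1, (hz' s).2.1, (hz' s).2.2.1⟩⟩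

/-- A splitting can be perturbed so as to be `Good`, provided that no undesired equality between
two values of `C` persists under all small perturbations. -/
theorem exists_split_good {M : Type*} {C : Cantor → Cantor → M} (hS : SepC C) (i0 i1 j : Prop)
    {n m m0 : ℕ} {z z' : List Bool → Cantor} (hA : Apart n z m) (hz' : Split n z m z')
    (hm0 : m ≤ m0)
    (hd : ∀ (v : List Bool → Cantor) (k : ℕ), (∀ s, Agr m0 (z' s) (v s)) →
      (∀ a b : List Bool, a.length = n + 1 → b.length = n + 1 → splitLevel (v a) (v b) < k) →
      ∀ a b a' b' : List Bool, a.length = n + 1 → b.length = n + 1 → a'.length = n + 1 →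
      b'.length = n + 1 → clex (v a) (v b) → clex (v a') (v b') →
      (∀ w : List Bool → Cantor, (∀ s, Agr k (v s) (w s)) → C (w a) (w b) = C (w a') (w b')) →
      Lab i0 i1 j v a b a' b') :
    ∃ w, Split n z m w ∧ Good C i0 i1 j (n + 1) w := by
  obtain ⟨w, hw, hc, hG⟩ := exists_good hS i0 i1 j (n + 1) z' m0 hd
    (fun a b ha hb hab => hz'.ne hA ha hb hab)
  refine ⟨w, fun s hs => ⟨(hz' s hs).1.trans ((hw _).mono hm0),
    (hz' s hs).2.1.trans ((hw _).mono hm0), hc _ _ (by simp [hs]) (by simp [hs]) (hz' s hs).2.2⟩, hG⟩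

/-! ### The canonical forms, up to reversing the order -/

/-- If no box is independent of either variable, both points are determined by the value. -/
theorem canon_of_nb {M : Type*} {C : Cantor → Cantor → M} (hS : SepC C) (hX : NB (XI C))
    (hY : NB (YI C)) : Canon C := by
  refine canon_of_ext hS True True False (fun _ _ h => h)
    (fun x y x' y' _ _ h0 h1 _ => by rw [h0 trivial, h1 trivial]) fun n z m hA hG => ?_
  obtain ⟨z', hz'⟩ := exists_split z m
  refine exists_split_good hS _ _ _ hA (hz' n) le_rfl ?_
  intro v k hv hk a b a' b' ha hb ha' hb' h1 h2 hp
  have e : a = a' := fst_eq_of_persist hX hp h1 h2 (hk a b ha hb) (hk a' b' ha' hb')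
  subst e
  have hba : b ≠ a := by rintro rfl; exact h1.1 rfl
  refine ⟨fun _ => rfl, fun _ => ?_, fun h => h.elim⟩
  by_contra hbb
  exact hY _ _ _ h1 (hk a b ha hb) (yi_of_persist hp hba hba hbb)

/-- The value depends only on the first point, and on no box is it independent of it: the value
determines the first point. -/
theorem canon_of_fst {M : Type*} {C : Cantor → Cantor → M} (hS : SepC C) (hX : NB (XI C))
    {g : Cantor → M} (hg : ∀ x y, clex x y → C x y = g x) : Canon C := by
  refine canon_of_ext hS True False False (fun _ h _ => h)
    (fun x y x' y' h h' h0 _ _ => by rw [hg _ _ h, hg _ _ h', h0 trivial]) fun n z m hA hG => ?_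
  obtain ⟨z', hz'⟩ := exists_split z m
  refine exists_split_good hS _ _ _ hA (hz' n) le_rfl ?_
  intro v k hv hk a b a' b' ha hb ha' hb' h1 h2 hp
  exact ⟨fun _ => fst_eq_of_persist hX hp h1 h2 (hk a b ha hb) (hk a' b' ha' hb'),
    fun h => h.elim, fun h => h.elim⟩

/-- If the value depends only on the meet, either `C` can be made constant, or every basic open set
contains infinitely many values and each new meet can be given a new one. -/
theorem canon_of_meet {M : Type*} {C : Cantor → Cantor → M} (hS : SepC C)
    (hC : ∀ x y x' y', clex x y → clex x' y' → SM x y x' y' → C x y = C x' y') : Canon C := by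
  by_cases hv : ∃ val u m, DenseBox (GI C fun _ => val) u m
  · obtain ⟨val, u, m, hd⟩ := hv
    obtain ⟨φ, hφ, h⟩ := exists_emb_of_denseBox
      (fun x y k k' hk hP X Y hX hY => hP X Y (hX.mono hk) (hY.mono hk)) hd
    have hval : ∀ x y, clex x y → C (φ x) (φ y) = val := fun x y hxy => by
      obtain ⟨X, Y, k, hP, h⟩ := h x y hxy
      exact hP _ _ (h x y hxy (SM.refl _ _)).1 (h x y hxy (SM.refl _ _)).2
    refine ⟨φ, hφ, False, False, False, fun h _ _ => h, fun x y x' y' h h' => ?_⟩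
    simp [hval _ _ h, hval _ _ h']
  push Not at hv
  -- A pair in any given basic open set whose value avoids finitely many prescribed values.
  have fresh : ∀ (F : Set M), F.Finite → ∀ u m, ∃ x y, Agr m u x ∧ Agr m u y ∧ clex x y ∧
      C x y ∉ F := by
    intro F hF u m
    obtain ⟨u', m', hu, hm, hb⟩ := avoid (fun val => GI C fun _ => val) hF (fun i _ => hv i) u m
    have h := (exists_split (fun _ => u') m').choose_spec 0 [] rfl
    refine ⟨_, _, hu.trans (h.1.mono hm), hu.trans (h.2.1.mono hm), h.2.2, fun hmem => ?_⟩
    refine hb _ hmem _ _ _ ⟨h.1, h.2.1, h.2.2, Nat.lt_succ_self _, fun X Y hX hY => ?_⟩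
    exact (hC _ _ _ _ h.2.2 (clex_stable h.2.2 (Nat.lt_succ_self _) hX hY)
      (SM_stable h.2.2.1 (Nat.lt_succ_self _) hX hY)).symm
  refine canon_of_ext hS False False True (fun h _ _ => h)
    (fun x y x' y' h h' _ _ h2 => hC _ _ _ _ h h' (h2 trivial)) fun n z m hA hG => ?_
  have hOld : ((fun p : List Bool × List Bool => C (z p.1) (z p.2)) ''
      ({s | s.length = n} ×ˢ {s | s.length = n})).Finite :=
    ((finite_length n).prod (finite_length n)).image _
  set Old := (fun p : List Bool × List Bool => C (z p.1) (z p.2)) ''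
      ({s | s.length = n} ×ˢ {s | s.length = n}) with hOldd
  -- The two children `f s`, `g s` of each node `s` are chosen so that their values are new and
  -- pairwise different.
  have choice : ∀ S : Set (List Bool), S.Finite → ∃ f g : List Bool → Cantor,
      (∀ s ∈ S, Agr m (z s) (f s) ∧ Agr m (z s) (g s) ∧ clex (f s) (g s) ∧ C (f s) (g s) ∉ Old) ∧
      ∀ s ∈ S, ∀ t ∈ S, C (f s) (g s) = C (f t) (g t) → s = t := by
    intro S hS
    classical
    induction S, hS using Set.Finite.induction_on with
    | empty => exact ⟨z, z, fun s hs => absurd hs (notMem_empty s),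
        fun s hs => absurd hs (notMem_empty s)⟩
    | @insert s S hs hSf ih =>
      obtain ⟨f, g, h1, h2⟩ := ih
      obtain ⟨x, y, hx, hy, hxy, hF⟩ := fresh (Old ∪ (fun t => C (f t) (g t)) '' S)
        (hOld.union (hSf.image _)) (z s) m
      have hne : ∀ t ∈ S, t ≠ s := fun t ht e => hs (e ▸ ht)
      refine ⟨Function.update f s x, Function.update g s y, ?_, ?_⟩
      · rintro t (rfl | ht)
        · rw [Function.update_self, Function.update_self]
          exact ⟨hx, hy, hxy, fun h => hF (Or.inl h)⟩
        · rw [Function.update_of_ne (hne t ht), Function.update_of_ne (hne t ht)]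
          exact h1 t ht
      · rintro t (rfl | ht) t' (rfl | ht') he
        · rfl
        · rw [Function.update_self, Function.update_self, Function.update_of_ne (hne t' ht'),
            Function.update_of_ne (hne t' ht')] at he
          exact absurd (Or.inr ⟨t', ht', he.symm⟩) hF
        · rw [Function.update_self, Function.update_self, Function.update_of_ne (hne t ht),
            Function.update_of_ne (hne t ht)] at he
          exact absurd (Or.inr ⟨t, ht, he⟩) hF
        · rw [Function.update_of_ne (hne t ht), Function.update_of_ne (hne t ht),
            Function.update_of_ne (hne t' ht'), Function.update_of_ne (hne t' ht')] at he
          exact h2 t ht t' ht' he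
  obtain ⟨f, g, hfg, hinj⟩ := choice _ (finite_length n)
  obtain ⟨z', hz'⟩ := exists_join f g
  have hsp : Split n z m z' := fun s hs => by
    rw [(hz' s).1, (hz' s).2]
    exact ⟨(hfg s hs).1, (hfg s hs).2.1, (hfg s hs).2.2.1⟩
  refine ⟨z', hsp, ?_⟩
  -- A pair of new nodes either splits as its parents do, or consists of two siblings.
  have kind : ∀ a b : List Bool, a.length = n + 1 → b.length = n + 1 → clex (z' a) (z' b) →
      (∃ s t : List Bool, s.length = n ∧ t.length = n ∧ clex (z s) (z t) ∧ Agr m (z s) (z' a) ∧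
        Agr m (z t) (z' b) ∧ SM (z s) (z t) (z' a) (z' b) ∧ C (z' a) (z' b) ∈ Old) ∨
      (∃ s : List Bool, s.length = n ∧ a = s ++ [false] ∧ b = s ++ [true] ∧
        C (z' a) (z' b) = C (f s) (g s)) := by
    intro a b ha hb hab
    obtain ⟨s, i, hs, rfl⟩ := exists_snoc ha
    obtain ⟨t, i', ht, rfl⟩ := exists_snoc hb
    by_cases hst : s = t
    · subst hst
      right
      have h3 := (hsp s hs).2.2
      cases i <;> cases i'
      · exact absurd rfl hab.1
      · exact ⟨s, hs, rfl, rfl, by rw [(hz' s).1, (hz' s).2]⟩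
      · exact (clex_asymm h3 hab).elim
      · exact absurd rfl hab.1
    · left
      have h1 := hsp.agr hs i
      have h2 := hsp.agr ht i'
      obtain ⟨hc, hsm, -⟩ := clex_of_agr (hA s t hs ht hst) h1 h2 hab
      exact ⟨s, t, hs, ht, hc, h1, h2, hsm, ⟨(s, t), ⟨hs, ht⟩, hC _ _ _ _ hc hab hsm⟩⟩
  intro a b a' b' ha hb ha' hb' h1 h2 he
  refine ⟨fun h => h.elim, fun h => h.elim, fun _ => ?_⟩
  rcases kind a b ha hb h1 with ⟨s, t, hs, ht, hc, e1, e2, hsm, ho⟩ | ⟨s, hs, rfl, rfl, ho⟩ <;>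
  rcases kind a' b' ha' hb' h2 with
    ⟨s', t', hs', ht', hc', e1', e2', hsm', ho'⟩ | ⟨s', hs', rfl, rfl, ho'⟩
  · have := (hG s t s' t' hs ht hs' ht' hc hc' _ _ _ _ e1 e2 e1' e2' he).2.2 trivial
    exact (hsm.symm.trans this).trans hsm'
  · rw [he, ho'] at ho
    exact absurd ho (hfg s' hs').2.2.2
  · rw [← he, ho] at ho'
    exact absurd ho' (hfg s hs).2.2.2
  · rw [ho, ho'] at he
    rw [hinj s hs s' hs' he]
    exact SM.refl _ _

/-- If the value depends only on the first point and the meet, on no box is independent of the first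
point, and is nowhere densely a function of the first point alone, then it determines both. -/
theorem canon_of_fst_meet {M : Type*} {C : Cantor → Cantor → M} (hS : SepC C)
    (hC : ∀ x y y', clex x y → clex x y' → SM x y x y' → C x y = C x y')
    (hX : NB (XI C)) (hg : ∀ g u m, ¬ DenseBox (GI C g) u m) : Canon C := by
  refine canon_of_ext hS True False True (fun _ h => h.elim)
    (fun x y x' y' h h' h0 _ h2 => ?_) fun n z m hA hG => ?_
  · obtain rfl := h0 trivial
    exact hC _ _ _ h h' (h2 trivial)
  -- The children of `s` are placed where, on every box, `C` differs from `fun x => C x (z t)`, for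
  -- each of the finitely many nodes `t`.
  have hu : ∀ s, ∃ u' m', Agr m (z s) u' ∧ m ≤ m' ∧
      ∀ t ∈ {t : List Bool | t.length = n}, NoBox (GI C fun x => C x (z t)) u' m' := fun s =>
    avoid (fun t => GI C fun x => C x (z t)) (finite_length n) (fun i _ => hg _) (z s) m
  choose u l hzu hml hno using hu
  have hsplit := fun s => (exists_split (fun _ => u s) (l s)).choose_spec 0 [] rfl
  obtain ⟨z', hz'⟩ := exists_join
    (fun s => (exists_split (fun _ => u s) (l s)).choose ([] ++ [false]))
    (fun s => (exists_split (fun _ => u s) (l s)).choose ([] ++ [true]))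
  have hzl : ∀ s i, Agr (l s) (u s) (z' (s ++ [i])) := by
    intro s i
    cases i
    · rw [(hz' s).1]; exact (hsplit s).1
    · rw [(hz' s).2]; exact (hsplit s).2.1
  have hsp : Split n z m z' := by
    intro s _
    refine ⟨(hzu s).trans ((hzl s _).mono (hml s)), (hzu s).trans ((hzl s _).mono (hml s)), ?_⟩
    rw [(hz' s).1, (hz' s).2]
    exact (hsplit s).2.2
  obtain ⟨K, hK⟩ := ((finite_length n).image l).bddAbove
  have hK' : ∀ s : List Bool, s.length = n → l s ≤ max m K := fun s hs =>
    (hK ⟨s, hs, rfl⟩).trans (le_max_right _ _)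
  refine exists_split_good hS _ _ _ hA hsp (le_max_left m K) ?_
  intro v k hv hk
  have hvl : ∀ (s : List Bool) i, s.length = n → Agr (l s) (u s) (v (s ++ [i])) := fun s i hs =>
    (hzl s i).trans ((hv _).mono (hK' s hs))
  have hvm : ∀ (s : List Bool) i, s.length = n → Agr m (z s) (v (s ++ [i])) := fun s i hs =>
    (hzu s).trans ((hvl s i hs).mono (hml s))
  have old : ∀ s i t i', s.length = n → t.length = n → s ≠ t →
      clex (v (s ++ [i])) (v (t ++ [i'])) →
      clex (z s) (z t) ∧ SM (z s) (z t) (v (s ++ [i])) (v (t ++ [i'])) ∧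
      splitLevel (z s) (z t) < m :=
    fun s i t i' hs ht hst hab => clex_of_agr (hA s t hs ht hst) (hvm s i hs) (hvm t i' ht) hab
  -- The value at two siblings cannot persistently agree with the value at two cousins.
  have mixed : ∀ s i i' t j, s.length = n → t.length = n → s ≠ t →
      clex (v (s ++ [i])) (v (s ++ [i'])) → clex (v (s ++ [i])) (v (t ++ [j])) →
      (∀ w : List Bool → Cantor, (∀ s, Agr k (v s) (w s)) →
        C (w (s ++ [i])) (w (s ++ [i'])) = C (w (s ++ [i])) (w (t ++ [j]))) → False := by
    intro s i i' t j hs ht hst h1 h2 hp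
    have hls : ∀ s : List Bool, s.length = n → ∀ i, (s ++ [i]).length = n + 1 := by
      intro s hs i; simp [hs]
    refine hno s t ht (v (s ++ [i])) (v (s ++ [i'])) k ⟨hvl s i hs, hvl s i' hs, h1,
      hk _ _ (hls s hs i) (hls s hs i'), fun X Y hX hY => ?_⟩
    classical
    have e1 : s ++ [i] ≠ s ++ [i'] := fun e => h1.1 (by rw [e])
    have e2 : t ++ [j] ≠ s ++ [i] := fun e => h2.1 (by rw [e])
    have e3 : t ++ [j] ≠ s ++ [i'] := fun e => hst (List.append_inj_left' e rfl).symm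
    have := hp (Function.update (Function.update v (s ++ [i']) Y) (s ++ [i]) X) fun r => by
      by_cases r1 : r = s ++ [i]
      · subst r1; rwa [Function.update_self]
      · rw [Function.update_of_ne r1]
        by_cases r2 : r = s ++ [i']
        · subst r2; rwa [Function.update_self]
        · rw [Function.update_of_ne r2]; exact Agr.refl _ _
    rw [Function.update_self, Function.update_of_ne e1.symm, Function.update_self,
      Function.update_of_ne e2, Function.update_of_ne e3] at this
    rw [this]
    obtain ⟨hc, -, hl⟩ := old s i t j hs ht hst h2
    have hX' : Agr m (z s) X := (hvm s i hs).trans (hX.mono ?_)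
    · have q1 := clex_stable hc hl hX' (hvm t j ht)
      have q2 := clex_stable hc hl hX' (Agr.refl _ (z t))
      exact hC _ _ _ q1 q2 ((SM_stable hc.1 hl hX' (hvm t j ht)).symm.trans
        (SM_stable hc.1 hl hX' (Agr.refl _ _)))
    · have hmk : m ≤ splitLevel (v (s ++ [i])) (v (s ++ [i'])) :=
        ((hvm s i hs).symm.trans (hvm s i' hs)).le_splitLevel h1.1
      exact hmk.trans (hk _ _ (hls s hs i) (hls s hs i')).le
  intro a b a' b' ha hb ha' hb' h1 h2 hp
  obtain rfl : a = a' := fst_eq_of_persist hX hp h1 h2 (hk a b ha hb) (hk a' b' ha' hb')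
  refine ⟨fun _ => rfl, fun h => h.elim, fun _ => ?_⟩
  obtain ⟨s, i, hs, rfl⟩ := exists_snoc ha
  obtain ⟨t, i', ht, rfl⟩ := exists_snoc hb
  obtain ⟨t', j', ht', rfl⟩ := exists_snoc hb'
  by_cases e : s = t <;> by_cases e' : s = t'
  · subst e e'
    have : i' = j' := by
      have q1 : i ≠ i' := by rintro rfl; exact h1.1 rfl
      have q2 : i ≠ j' := by rintro rfl; exact h2.1 rfl
      revert q1 q2; cases i <;> cases i' <;> cases j' <;> simp
    rw [this]; exact SM.refl _ _
  · subst e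
    exact (mixed s i i' t' j' hs ht' e' h1 h2 hp).elim
  · subst e'
    exact (mixed s i j' t i' hs ht e h2 h1 fun w hw => (hp w hw).symm).elim
  · obtain ⟨c1, s1, -⟩ := old s i t i' hs ht e h1
    obtain ⟨c2, s2, -⟩ := old s i t' j' hs ht' e' h2
    have := (hG s t s t' hs ht hs ht' c1 c2 _ _ _ _ (hvm s i hs) (hvm t i' ht) (hvm s i hs)
      (hvm t' j' ht') (hp v fun _ => Agr.refl _ _)).2.2 trivial
    exact (s1.symm.trans this).trans s2

/-! ### The dichotomies -/

/-- If boxes of constancy are dense somewhere, `C` depends only on the meet on some embedded copy. -/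
theorem canon_of_denseBox_CI {M : Type*} {C : Cantor → Cantor → M} (hS : SepC C) {u : Cantor}
    {m : ℕ} (hd : DenseBox (CI C) u m) : Canon C := by
  obtain ⟨φ, hφ, h⟩ := exists_emb_of_denseBox
    (fun x y k k' hk hP X Y X' Y' hX hY hX' hY' =>
      hP X Y X' Y' (hX.mono hk) (hY.mono hk) (hX'.mono hk) (hY'.mono hk)) hd
  refine Canon.of_comp hφ (canon_of_meet (hS.comp hφ) fun x y x' y' hxy hxy' hsm => ?_)
  obtain ⟨X, Y, k, hP, h⟩ := h x y hxy
  exact hP _ _ _ _ (h x y hxy (SM.refl _ _)).1 (h x y hxy (SM.refl _ _)).2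
    (h x' y' hxy' hsm).1 (h x' y' hxy' hsm).2

/-- A box independent of the first variable is a box of constancy once the value depends only on
the first point and the meet. -/
theorem nb_xi_of_nb_ci {M : Type*} {C : Cantor → Cantor → M}
    (hC : ∀ x y y', clex x y → clex x y' → SM x y x y' → C x y = C x y') (h : NB (CI C)) :
    NB (XI C) := by
  intro x y k hxy hk hX
  refine h x y k hxy hk fun X Y X' Y' h1 h2 h3 h4 => ?_
  rw [hX X X' Y h1 h3 h2]
  exact hC _ _ _ (clex_stable hxy hk h3 h2) (clex_stable hxy hk h3 h4)
    ((SM_stable hxy.1 hk h3 h2).symm.trans (SM_stable hxy.1 hk h3 h4))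

/-- The case of a map whose value depends only on the first point and the meet. -/
theorem canon_of_indep_snd {M : Type*} {C : Cantor → Cantor → M} (hS : SepC C)
    (hC : ∀ x y y', clex x y → clex x y' → SM x y x y' → C x y = C x y') : Canon C := by
  by_cases hd : DenseBox (CI C) (fun _ => false) 0
  · exact canon_of_denseBox_CI hS hd
  obtain ⟨u, m, -, -, hno⟩ := exists_noBox hd
  refine Canon.of_comp (emb_pre u m) ?_
  have hS1 := hS.comp (emb_pre u m)
  have hC1 : ∀ x y y', clex x y → clex x y' → SM x y x y' →
      (fun x y => C (pre u m x) (pre u m y)) x y = (fun x y => C (pre u m x) (pre u m y)) x y' :=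
    fun x y y' h h' hsm => hC _ _ _ (clex_pre h) (clex_pre h') (((emb_pre u m).sm _ _ _ _ h h').2 hsm)
  have hn1 : NB (CI fun x y => C (pre u m x) (pre u m y)) := hno.pre (CI.pre u m)
  clear hd hno hS hC
  generalize (fun x y => C (pre u m x) (pre u m y)) = D at *
  by_cases hg : ∃ g u m, DenseBox (GI D g) u m
  · obtain ⟨g, u, m, hd⟩ := hg
    obtain ⟨φ, hφ, h⟩ := exists_emb_of_denseBox
      (fun x y k k' hk hP X Y hX hY => hP X Y (hX.mono hk) (hY.mono hk)) hd
    have hval : ∀ x y, clex x y → D (φ x) (φ y) = g (φ x) := fun x y hxy => by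
      obtain ⟨X, Y, k, hP, h⟩ := h x y hxy
      exact hP _ _ (h x y hxy (SM.refl _ _)).1 (h x y hxy (SM.refl _ _)).2
    refine Canon.of_comp hφ ?_
    have hS2 := hS1.comp hφ
    by_cases hd2 : DenseBox (CI fun x y => D (φ x) (φ y)) (fun _ => false) 0
    · exact canon_of_denseBox_CI hS2 hd2
    obtain ⟨u, m, -, -, hno⟩ := exists_noBox hd2
    refine Canon.of_comp (emb_pre u m) (canon_of_fst (hS2.comp (emb_pre u m)) ?_
      (g := fun x => g (φ (pre u m x))) fun x y hxy => hval _ _ (clex_pre hxy))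
    refine nb_xi_of_nb_ci (fun x y y' h h' _ => ?_)
      (hno.pre (CI.pre (C := fun x y => D (φ x) (φ y)) u m))
    rw [hval _ _ (clex_pre h), hval _ _ (clex_pre h')]
  · push Not at hg
    exact canon_of_fst_meet hS1 hC1 (nb_xi_of_nb_ci hC1 hn1) hg

/-- The order-reversing involution of the Cantor space. -/
def revBits (x : Cantor) : Cantor := fun k => !x k

theorem revBits_revBits (x : Cantor) : revBits (revBits x) = x := by funext k; simp [revBits]

theorem agr_revBits {m : ℕ} {x y : Cantor} : Agr m (revBits x) (revBits y) ↔ Agr m x y := by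
  simp [Agr, revBits]

theorem clex_revBits {x y : Cantor} (h : clex x y) : clex (revBits y) (revBits x) := by
  refine clex_iff.2 ⟨splitLevel x y, agr_revBits.2 (agr_splitLevel x y).symm, ?_, ?_⟩
  · simp [revBits, clex_true h]
  · simp [revBits, clex_false h]

theorem SM_revBits {x y x' y' : Cantor} (h : clex x y) (h' : clex x' y') :
    SM (revBits y) (revBits x) (revBits y') (revBits x') ↔ SM x y x' y' := by
  have e : ∀ x y, clex x y → splitLevel (revBits y) (revBits x) = splitLevel x y := fun x y h =>
    splitLevel_eq (agr_revBits.2 (agr_splitLevel x y).symm) (by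
      simp [revBits, clex_true h, clex_false h])
  unfold SM
  rw [e x y h, e x' y' h', agr_revBits]
  refine and_congr_right fun hl => ?_
  have h1 := agr_splitLevel x y
  have h2 := agr_splitLevel x' y'
  rw [← hl] at h2
  exact ⟨fun h3 => (h1.trans h3).trans h2.symm, fun h3 => (h1.symm.trans h3).trans h2⟩

/-- Canonical form is invariant under reversing the order of the Cantor space. -/
theorem Canon.of_revBits {M : Type*} {C : Cantor → Cantor → M}
    (h : Canon fun x y => C (revBits y) (revBits x)) : Canon C := by
  obtain ⟨φ, hφ, i0, i1, j, hij, hC⟩ := h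
  have inj : ∀ x y, revBits x = revBits y ↔ x = y := fun x y =>
    ⟨fun h => by rw [← revBits_revBits x, h, revBits_revBits], fun h => by rw [h]⟩
  refine ⟨fun x => revBits (φ (revBits x)), ⟨fun m => ?_, fun x y h => ?_, fun x y x' y' h h' => ?_⟩,
    i1, i0, j, fun h1 h0 => hij h0 h1, fun x y x' y' h h' => ?_⟩
  · obtain ⟨k, hk⟩ := hφ.cont m
    exact ⟨k, fun x x' h => agr_revBits.2 (hk _ _ (agr_revBits.2 h))⟩
  · exact clex_revBits (hφ.mono _ _ (clex_revBits h))
  · rw [SM_revBits (hφ.mono _ _ (clex_revBits h)) (hφ.mono _ _ (clex_revBits h')),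
      hφ.sm _ _ _ _ (clex_revBits h) (clex_revBits h'), SM_revBits h h']
  · have := hC _ _ _ _ (clex_revBits h) (clex_revBits h')
    rw [SM_revBits h h', inj, inj] at this
    rw [this]
    tauto

theorem SepC.revBits {M : Type*} {C : Cantor → Cantor → M} (hS : SepC C) :
    SepC fun x y => C (revBits y) (revBits x) := by
  intro x y x' y' h h' hne
  obtain ⟨m, hm⟩ := hS _ _ _ _ (clex_revBits h) (clex_revBits h') hne
  exact ⟨m, fun X Y X' Y' h1 h2 h3 h4 => hm _ _ _ _ (agr_revBits.2 h2) (agr_revBits.2 h1)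
    (agr_revBits.2 h4) (agr_revBits.2 h3)⟩

/-- Every map whose inequalities are witnessed by finitely many coordinates is canonical on the
range of some embedding. -/
theorem SepC.canon {M : Type*} {C : Cantor → Cantor → M} (hS : SepC C) : Canon C := by
  by_cases hdX : DenseBox (XI C) (fun _ => false) 0
  · obtain ⟨φ, hφ, h⟩ := exists_emb_of_denseBox
      (fun x y k k' hk hP X X' Y hX hX' hY => hP X X' Y (hX.mono hk) (hX'.mono hk) (hY.mono hk)) hdX
    refine Canon.of_comp hφ (Canon.of_revBits (canon_of_indep_snd (hS.comp hφ).revBits ?_))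
    intro y x x' hyx hyx' hsm
    have c1 := clex_revBits hyx
    have c2 := clex_revBits hyx'
    obtain ⟨X, Y, k, hP, h⟩ := h _ _ c1
    exact hP _ _ _ (h _ _ c1 (SM.refl _ _)).1 (h _ _ c2 ((SM_revBits hyx hyx').2 hsm)).1
      (h _ _ c1 (SM.refl _ _)).2
  obtain ⟨u, m, -, -, hno⟩ := exists_noBox hdX
  refine Canon.of_comp (emb_pre u m) ?_
  have hS1 := hS.comp (emb_pre u m)
  have hX1 : NB (XI fun x y => C (pre u m x) (pre u m y)) := hno.pre (XI.pre u m)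
  clear hdX hno hS
  generalize (fun x y => C (pre u m x) (pre u m y)) = D at *
  by_cases hdY : DenseBox (YI D) (fun _ => false) 0
  · obtain ⟨φ, hφ, h⟩ := exists_emb_of_denseBox
      (fun x y k k' hk hP X Y Y' hX hY hY' => hP X Y Y' (hX.mono hk) (hY.mono hk) (hY'.mono hk)) hdY
    refine Canon.of_comp hφ (canon_of_indep_snd (hS1.comp hφ) ?_)
    intro x y y' hxy hxy' hsm
    obtain ⟨X, Y, k, hP, h⟩ := h _ _ hxy
    exact hP _ _ _ (h _ _ hxy (SM.refl _ _)).1 (h _ _ hxy (SM.refl _ _)).2 (h _ _ hxy' hsm).2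
  obtain ⟨u, m, -, -, hno⟩ := exists_noBox hdY
  exact Canon.of_comp (emb_pre u m) (canon_of_nb (hS1.comp (emb_pre u m))
    ((hX1.noBox u m).pre (XI.pre u m)) (hno.pre (YI.pre u m)))

/-! ### Passing to generic pairs, and the conclusion -/

theorem exists_agr_of_isOpen {U : Set Cantor} (hU : IsOpen U) {x : Cantor} (hx : x ∈ U) :
    ∃ m, ∀ y, Agr m x y → y ∈ U := by
  obtain ⟨_, ⟨y, n, rfl⟩, hxy, hs⟩ := (PiNat.isTopologicalBasis_cylinders
    (fun _ : ℕ => Bool)).exists_subset_of_mem_open hx hU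
  refine ⟨n, fun w hw => hs ?_⟩
  rw [← PiNat.mem_cylinder_iff_eq.1 hxy]
  exact PiNat.mem_cylinder_iff.2 fun i hi => (hw i hi).symm

theorem isOpen_agr (m : ℕ) (x : Cantor) : IsOpen {y | Agr m x y} := by
  convert PiNat.isOpen_cylinder (fun _ : ℕ => Bool) x m using 1
  ext y
  rw [PiNat.mem_cylinder_iff]
  exact ⟨fun h i hi => (h i hi).symm, fun h i hi => (h i hi).symm⟩

theorem isOpen_agr_prod (m : ℕ) (x y : Cantor) :
    IsOpen {p : Cantor × Cantor | Agr m x p.1 ∧ Agr m y p.2} :=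
  ((isOpen_agr m x).preimage continuous_fst).inter ((isOpen_agr m y).preimage continuous_snd)

theorem exists_agr_of_isOpen_prod {U : Set (Cantor × Cantor)} (hU : IsOpen U) {x y : Cantor}
    (h : (x, y) ∈ U) : ∃ m, ∀ X Y, Agr m x X → Agr m y Y → (X, Y) ∈ U := by
  obtain ⟨V, W, hV, hW, hx, hy, hs⟩ := isOpen_prod_iff.1 hU x y h
  obtain ⟨k, hk⟩ := exists_agr_of_isOpen hV hx
  obtain ⟨l, hl⟩ := exists_agr_of_isOpen hW hy
  exact ⟨max k l, fun X Y hX hY =>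
    hs ⟨hk X (hX.mono (le_max_left _ _)), hl Y (hY.mono (le_max_right _ _))⟩⟩

theorem isOpen_pairsSet : IsOpen (PairsSet univ) := by
  rw [isOpen_iff_mem_nhds]
  rintro ⟨x, y⟩ ⟨-, -, h⟩
  refine Filter.mem_of_superset ((isOpen_agr_prod (splitLevel x y + 1) x y).mem_nhds
    ⟨Agr.refl _ _, Agr.refl _ _⟩) ?_
  rintro ⟨X, Y⟩ ⟨hX, hY⟩
  exact ⟨mem_univ _, mem_univ _, clex_stable h (Nat.lt_succ_self _) hX hY⟩

/-- An embedding all of whose pairs lie in countably many given dense open sets of pairs, and in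
whose range the level of a meet determines the meet. -/
theorem exists_emb_generic (O : ℕ → Cantor → Cantor → Prop)
    (ho : ∀ k x y, O k x y → ∃ m, ∀ X Y, Agr m x X → Agr m y Y → O k X Y)
    (hd : ∀ k x y, clex x y → ∀ m, ∃ X Y, Agr m x X ∧ Agr m y Y ∧ O k X Y) :
    ∃ φ, Emb φ ∧ (∀ x y, clex x y → ∀ k, O k (φ x) (φ y)) ∧
      ∀ x y x' y', clex x y → clex x' y' →
        splitLevel (φ x) (φ y) = splitLevel (φ x') (φ y') → SM x y x' y' := by
  obtain ⟨φ, hφ, z, m, hz, hagr⟩ := fusion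
    (fun n z m => (∀ a b : List Bool, a.length = n → b.length = n → clex (z a) (z b) → ∀ X Y,
        Agr m (z a) X → Agr m (z b) Y → ∀ k < n, O k X Y) ∧
      ∀ a b a' b' : List Bool, a.length = n → b.length = n → a'.length = n → b'.length = n →
        clex (z a) (z b) → clex (z a') (z b') →
        splitLevel (z a) (z b) = splitLevel (z a') (z b') → SM (z a) (z b) (z a') (z b'))
    (fun _ => fun _ => false) 0
    ⟨fun a b _ _ h => absurd rfl h.1, fun a b _ _ _ _ _ _ h => absurd rfl h.1⟩
    (by
      rintro n z m hA ⟨-, hsk⟩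
      -- Distinct nodes are split at distinct levels.
      obtain ⟨z', hz'⟩ := exists_split_levels z fun s => m + Encodable.encode s
      have hsp : Split n z m z' := fun s _ => ⟨(hz' s).1.mono (Nat.le_add_right _ _),
        (hz' s).2.1.mono (Nat.le_add_right _ _), (hz' s).2.2.1⟩
      have hne := fun a b => hsp.ne (a := a) (b := b) hA
      obtain ⟨k0, hk0⟩ := exists_sep (n + 1) z'
      set m0 := max m k0 with hm0
      have st : ∀ w : List Bool → Cantor, (∀ s, Agr m0 (z' s) (w s)) → ∀ a b : List Bool,
          a.length = n + 1 → b.length = n + 1 → a ≠ b →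
          (clex (z' a) (z' b) ↔ clex (w a) (w b)) ∧ SM (z' a) (z' b) (w a) (w b) := by
        intro w hw a b ha hb hab
        have h2 : splitLevel (z' a) (z' b) < m0 := (hk0 a b ha hb).trans_le (le_max_right _ _)
        exact ⟨⟨fun h => clex_stable h h2 (hw a) (hw b), fun h =>
          (clex_of_agr (not_agr_of_lt (hne a b ha hb hab) h2) (hw a) (hw b) h).1⟩,
          SM_stable (hne a b ha hb hab) h2 (hw a) (hw b)⟩
      have hneq : ∀ {w : List Bool → Cantor} {a b : List Bool}, clex (w a) (w b) → a ≠ b := by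
        rintro w a b h rfl
        exact h.1 rfl
      have hfin : {t : (List Bool × List Bool) × ℕ | (t.1.1.length = n + 1 ∧
          t.1.2.length = n + 1 ∧ t.2 < n + 1) ∧ clex (z' t.1.1) (z' t.1.2)}.Finite :=
        (((finite_length (n + 1)).prod (finite_length (n + 1))).prod
          (finite_lt_nat (n + 1))).subset fun t ht => ⟨⟨ht.1.1, ht.1.2.1⟩, ht.1.2.2⟩
      obtain ⟨w, hw, hO⟩ := perturb
        (fun (t : (List Bool × List Bool) × ℕ) (w : List Bool → Cantor) =>
          O t.2 (w t.1.1) (w t.1.2)) hfin z' m0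
        (by
          rintro ⟨⟨a, b⟩, k⟩ - w - h
          obtain ⟨l, hl⟩ := ho _ _ _ h
          exact ⟨l, fun v hv => hl _ _ (hv a) (hv b)⟩)
        (by
          rintro ⟨⟨a, b⟩, k⟩ ⟨⟨ha, hb, -⟩, hab⟩ w hw l -
          classical
          obtain ⟨X, Y, hX, hY, h⟩ := hd k _ _ ((st w hw a b ha hb (hneq hab)).1.1 hab) l
          refine ⟨Function.update (Function.update w b Y) a X, fun s => ?_, ?_⟩
          · by_cases h1 : s = a
            · subst h1; rwa [Function.update_self]
            · rw [Function.update_of_ne h1]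
              by_cases h2 : s = b
              · subst h2; rwa [Function.update_self]
              · rw [Function.update_of_ne h2]; exact Agr.refl _ _
          · rwa [Function.update_self, Function.update_of_ne (hneq hab).symm,
              Function.update_self])
      have hwm : ∀ s, Agr m (z' s) (w s) := fun s => (hw s).mono (le_max_left _ _)
      have hskz : ∀ a b a' b' : List Bool, a.length = n + 1 → b.length = n + 1 →
          a'.length = n + 1 → b'.length = n + 1 → clex (z' a) (z' b) → clex (z' a') (z' b') →
          splitLevel (z' a) (z' b) = splitLevel (z' a') (z' b') →
          SM (z' a) (z' b) (z' a') (z' b') := by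
        have kind : ∀ a b : List Bool, a.length = n + 1 → b.length = n + 1 →
            clex (z' a) (z' b) →
            (∃ s t : List Bool, s.length = n ∧ t.length = n ∧ clex (z s) (z t) ∧
              SM (z s) (z t) (z' a) (z' b) ∧ splitLevel (z s) (z t) < m) ∨
            (∃ s : List Bool, a = s ++ [false] ∧ b = s ++ [true]) := by
          intro a b ha hb hab
          obtain ⟨s, i, hs, rfl⟩ := exists_snoc ha
          obtain ⟨t, i', ht, rfl⟩ := exists_snoc hb
          by_cases hst : s = t
          · subst hst
            right
            have h3 := (hsp s hs).2.2
            cases i <;> cases i'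
            · exact absurd rfl hab.1
            · exact ⟨s, rfl, rfl⟩
            · exact (clex_asymm h3 hab).elim
            · exact absurd rfl hab.1
          · exact Or.inl ⟨s, t, hs, ht,
              clex_of_agr (hA s t hs ht hst) (hsp.agr hs i) (hsp.agr ht i') hab⟩
        intro a b a' b' ha hb ha' hb' h1 h2 he
        rcases kind a b ha hb h1 with ⟨s, t, hs, ht, hc, hsm, hl⟩ | ⟨s, rfl, rfl⟩ <;>
        rcases kind a' b' ha' hb' h2 with ⟨s', t', hs', ht', hc', hsm', hl'⟩ | ⟨s', rfl, rfl⟩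
        · have := hsk s t s' t' hs ht hs' ht' hc hc' (by rw [hsm.1, hsm'.1, he])
          exact (hsm.symm.trans this).trans hsm'
        · rw [(hz' s').2.2.2, ← hsm.1] at he
          omega
        · rw [(hz' s).2.2.2, ← hsm'.1] at he
          omega
        · rw [(hz' s).2.2.2, (hz' s').2.2.2] at he
          rw [Encodable.encode_injective (Nat.add_left_cancel he)]
          exact SM.refl _ _
      refine ⟨w, fun s hs => ⟨(hsp s hs).1.trans (hwm _), (hsp s hs).2.1.trans (hwm _),
        (st w hw _ _ (by simp [hs]) (by simp [hs]) (by simp)).1.1 (hsp s hs).2.2⟩, ?_⟩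
      have key : ∀ t : (List Bool × List Bool) × ℕ, ∃ l, t.1.1.length = n + 1 →
          t.1.2.length = n + 1 → t.2 < n + 1 → clex (w t.1.1) (w t.1.2) →
          ∀ X Y, Agr l (w t.1.1) X → Agr l (w t.1.2) Y → O t.2 X Y := by
        rintro ⟨⟨a, b⟩, k⟩
        by_cases h : (a.length = n + 1 ∧ b.length = n + 1 ∧ k < n + 1) ∧ clex (w a) (w b)
        · have h' := (st w hw a b h.1.1 h.1.2.1 (hneq h.2)).1.2 h.2
          obtain ⟨l, hl⟩ := ho _ _ _ (hO ((a, b), k) ⟨h.1, h'⟩)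
          exact ⟨l, fun _ _ _ _ => hl⟩
        · exact ⟨0, fun h1 h2 h3 h4 => absurd ⟨⟨h1, h2, h3⟩, h4⟩ h⟩
      choose f hf using key
      obtain ⟨K, hK⟩ := (((((finite_length (n + 1)).prod (finite_length (n + 1))).prod
          (finite_lt_nat (n + 1)))).image f).bddAbove
      refine ⟨K, fun m'' hm'' => ⟨fun a b ha hb hab X Y hX hY k hk => ?_,
        fun a b a' b' ha hb ha' hb' h1 h2 he => ?_⟩⟩
      · have hle : f ((a, b), k) ≤ m'' := (hK ⟨((a, b), k), ⟨⟨ha, hb⟩, hk⟩, rfl⟩).trans hm''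
        exact hf ((a, b), k) ha hb hk hab X Y (hX.mono hle) (hY.mono hle)
      · have s1 := st w hw a b ha hb (hneq h1)
        have s2 := st w hw a' b' ha' hb' (hneq h2)
        have := hskz a b a' b' ha hb ha' hb' (s1.1.2 h1) (s2.1.2 h2) (by
          rw [s1.2.1, s2.2.1, he])
        exact (s1.2.symm.trans this).trans s2.2)
  have node := fun n x y => hφ.clex_node (x := x) (y := y) (hz n).1 fun x => hagr x n
  refine ⟨φ, hφ, fun x y h k => ?_, fun x y x' y' h h' he => ?_⟩
  · have hn := node (max k (splitLevel x y) + 1) x y h (by omega)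
    exact (hz _).2.1 _ _ (length_restr _ _) (length_restr _ _) hn.1 _ _ (hagr x _).symm
      (hagr y _).symm k (by omega)
  · have h1 := node (max (splitLevel x y) (splitLevel x' y') + 1) x y h (by omega)
    have h2 := node (max (splitLevel x y) (splitLevel x' y') + 1) x' y' h' (by omega)
    have := (hz _).2.2 _ _ _ _ (length_restr _ _) (length_restr _ _) (length_restr _ _)
      (length_restr _ _) h1.1 h2.1 (by rw [h1.2.1, h2.2.1, he])
    exact (hφ.sm _ _ _ _ h h').1 ((h1.2.symm.trans this).trans h2.2)

theorem cdist_eq_iff {x y x' y' : Cantor} :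
    cdist x y = cdist x' y' ↔ splitLevel x y = splitLevel x' y' := by
  unfold cdist
  simp

/-- The point of the space of increasing pairs given by `x` and `y`. -/
def mkPair (x y : Cantor) (h : clex x y) : ↥(PairsSet univ) :=
  ⟨(x, y), mem_univ _, mem_univ _, h⟩

theorem exists_agr_of_isOpen_pairs {U : Set ↥(PairsSet univ)} (hU : IsOpen U) {x y : Cantor}
    (h : clex x y) (hxy : mkPair x y h ∈ U) :
    ∃ m, ∀ X Y, Agr m x X → Agr m y Y → ∃ h' : clex X Y, mkPair X Y h' ∈ U := by
  obtain ⟨V, hV, rfl⟩ := isOpen_induced_iff.1 hU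
  obtain ⟨k, hk⟩ := exists_agr_of_isOpen_prod hV (x := x) (y := y) hxy
  refine ⟨max k (splitLevel x y + 1), fun X Y hX hY =>
    ⟨clex_stable h (m := splitLevel x y + 1) (by omega) (hX.mono (le_max_right _ _))
      (hY.mono (le_max_right _ _)), hk X Y (hX.mono (le_max_left _ _))
      (hY.mono (le_max_left _ _))⟩⟩

/-- After restriction to the range of an embedding, inequality of two values of a Baire measurable
map on pairs is finitely witnessed, and the level of a meet determines the meet. -/
theorem exists_emb_sepC {M : Type*} [MetricSpace M] (c : ↥(PairsSet univ) → M)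
    (hc : BaireMeasurableFun c) :
    ∃ (φ : Cantor → Cantor) (hφ : Emb φ) (C : Cantor → Cantor → Option M), SepC C ∧
      (∀ x y (h : clex x y), C x y = some (c (mkPair (φ x) (φ y) (hφ.mono x y h)))) ∧
      ∀ x y x' y', clex x y → clex x' y' →
        splitLevel (φ x) (φ y) = splitLevel (φ x') (φ y') → SM x y x' y' := by
  classical
  have := isOpen_pairsSet.baireSpace
  obtain ⟨G, hG, hsep⟩ := exists_residual_separating c hc
  obtain ⟨D, hD, hDG⟩ := exists_open_dense_seq hG
  obtain ⟨φ, hφ, hgen, hskew⟩ := exists_emb_generic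
    (fun k x y => ∃ h : clex x y, mkPair x y h ∈ D k)
    (fun k x y ⟨h, hxy⟩ => exists_agr_of_isOpen_pairs (hD k).1 h hxy)
    (by
      intro k x y h m
      have ho : IsOpen {p : ↥(PairsSet univ) | Agr m x p.1.1 ∧ Agr m y p.1.2} :=
        (isOpen_agr_prod m x y).preimage continuous_subtype_val
      obtain ⟨⟨⟨X, Y⟩, _, _, hXY⟩, ⟨hX, hY⟩, hp⟩ :=
        (hD k).2.inter_open_nonempty _ ho ⟨mkPair x y h, Agr.refl _ _, Agr.refl _ _⟩
      exact ⟨X, Y, hX, hY, hXY, hp⟩)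
  have hGφ : ∀ x y (h : clex x y), mkPair (φ x) (φ y) (hφ.mono x y h) ∈ G :=
    fun x y h => hDG _ fun n => (hgen x y h n).2
  refine ⟨φ, hφ, fun x y => if h : clex x y then
    some (c (mkPair (φ x) (φ y) (hφ.mono x y h))) else none, ?_, fun x y h => dif_pos h, hskew⟩
  intro x y x' y' h h' hne
  simp only [dif_pos h, dif_pos h', ne_eq, Option.some_inj] at hne
  obtain ⟨U, V, hU, hV, hpU, hqV, hUV⟩ := hsep _ (hGφ x y h) _ (hGφ x' y' h') hne
  obtain ⟨k, hk⟩ := exists_agr_of_isOpen_pairs hU _ hpU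
  obtain ⟨l, hl⟩ := exists_agr_of_isOpen_pairs hV _ hqV
  obtain ⟨m, hm⟩ := hφ.cont (max k l)
  refine ⟨max m (max (splitLevel x y) (splitLevel x' y') + 1), fun X Y X' Y' h1 h2 h3 h4 => ?_⟩
  have c1 : clex X Y := clex_stable h (by omega) h1 h2
  have c2 : clex X' Y' := clex_stable h' (by omega) h3 h4
  have ag : ∀ {u v : Cantor}, Agr (max m (max (splitLevel x y) (splitLevel x' y') + 1)) u v →
      Agr (max k l) (φ u) (φ v) := fun h => hm _ _ (h.mono (le_max_left _ _))
  simp only [dif_pos c1, dif_pos c2, ne_eq, Option.some_inj]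
  exact hUV _ ⟨(hk _ _ ((ag h1).mono (le_max_left _ _)) ((ag h2).mono (le_max_left _ _))).2,
    hGφ X Y c1⟩ _ ⟨(hl _ _ ((ag h3).mono (le_max_right _ _))
    ((ag h4).mono (le_max_right _ _))).2, hGφ X' Y' c2⟩

/-- For increasing pairs, equality of the selected subsets is coordinatewise equality. -/
theorem image_pair_eq_iff {x y x' y' : Cantor} (h : clex x y) (h' : clex x' y') (i0 i1 : Prop) :
    ![x, y] '' {k : Fin 2 | (k = 0 ∧ i0) ∨ (k = 1 ∧ i1)} =
      ![x', y'] '' {k : Fin 2 | (k = 0 ∧ i0) ∨ (k = 1 ∧ i1)} ↔ (i0 → x = x') ∧ (i1 → y = y') := by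
  have key : ∀ u v : Cantor, ![u, v] '' {k : Fin 2 | (k = 0 ∧ i0) ∨ (k = 1 ∧ i1)} =
      {w | (i0 ∧ w = u) ∨ (i1 ∧ w = v)} := by
    intro u v
    ext w
    simp only [mem_image, mem_ofPred_eq, Fin.exists_fin_two]
    simp [eq_comm]
  rw [key, key, Set.ext_iff]
  simp only [mem_ofPred_eq]
  by_cases h0 : i0 <;> by_cases h1 : i1 <;> simp only [h0, h1, true_and, false_and, or_false,
    false_or, forall_true_left, false_imp_iff, and_true, implies_true, iff_self]
  · refine ⟨fun H => ?_, by rintro ⟨rfl, rfl⟩ w; rfl⟩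
    rcases (H x).1 (Or.inl rfl) with hx | hx <;> rcases (H y).1 (Or.inr rfl) with hy | hy
    · exact absurd (hx.trans hy.symm) h.1
    · exact ⟨hx, hy⟩
    · rw [hx, hy] at h
      exact (clex_asymm h h').elim
    · exact absurd (hx.trans hy.symm) h.1
  · exact ⟨fun H => (H x).1 rfl, by rintro rfl w; rfl⟩
  · exact ⟨fun H => (H y).1 rfl, by rintro rfl w; rfl⟩

/-- **Lefmann.** For a metric space `M` and a Baire measurable `c : [2^ω]^2 → M` there are
a perfect `P ⊆ 2^ω` and `I ⊆ {0,1}`, `J ⊆ {1}` with `J = ∅` if `I = {0,1}`, such that for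
all pairs from `[P]^2`: `c(x₀,x₁) = c(y₀,y₁)` iff `{x_i : i ∈ I} = {y_i : i ∈ I}` and
`{d(x_{j-1},x_j) : j ∈ J} = {d(y_{j-1},y_j) : j ∈ J}`. -/
theorem lefmann_theorem (M : Type*) [MetricSpace M]
    (c : ↥(PairsSet Set.univ) → M) (hc : BaireMeasurableFun c) :
    ∃ P : Set Cantor, PerfectSet P ∧
      ∃ (I : Set (Fin 2)) (J : Set (Fin 1)), (I = Set.univ → J = ∅) ∧
        ∀ p q : ↥(PairsSet Set.univ),
          (p : Cantor × Cantor) ∈ PairsSet P → (q : Cantor × Cantor) ∈ PairsSet P →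
          (c p = c q ↔
            (![(p : Cantor × Cantor).1, (p : Cantor × Cantor).2] '' I =
              ![(q : Cantor × Cantor).1, (q : Cantor × Cantor).2] '' I) ∧
            ((fun _ : Fin 1 => cdist (p : Cantor × Cantor).1 (p : Cantor × Cantor).2) '' J =
              (fun _ : Fin 1 => cdist (q : Cantor × Cantor).1 (q : Cantor × Cantor).2) '' J)) := by
  obtain ⟨φ, hφ, C, hC, hCc, hskew⟩ := exists_emb_sepC c hc
  obtain ⟨ψ, hψ, i0, i1, j, hij, hcan⟩ := hC.canon
  have hθ := hφ.comp hψ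
  refine ⟨range (φ ∘ ψ), hθ.perfectSet_range, {k | (k = 0 ∧ i0) ∨ (k = 1 ∧ i1)}, {_k | j}, ?_, ?_⟩
  · intro h
    have h0 : (0 : Fin 2) ∈ {k : Fin 2 | (k = 0 ∧ i0) ∨ (k = 1 ∧ i1)} := h ▸ mem_univ _
    have h1 : (1 : Fin 2) ∈ {k : Fin 2 | (k = 0 ∧ i0) ∨ (k = 1 ∧ i1)} := h ▸ mem_univ _
    have hj := hij (by simpa using h0) (by simpa using h1)
    exact eq_empty_of_forall_notMem fun _ hk => hj hk
  rintro ⟨⟨_, _⟩, hp⟩ ⟨⟨_, _⟩, hq⟩ ⟨⟨x, rfl⟩, ⟨y, rfl⟩, h⟩ ⟨⟨x', rfl⟩, ⟨y', rfl⟩, h'⟩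
  -- The embedding also reflects the order, which is total.
  have reflect : ∀ {u v : Cantor}, clex ((φ ∘ ψ) u) ((φ ∘ ψ) v) → clex u v := by
    intro u v huv
    rcases clex_total (x := u) (y := v) (by rintro rfl; exact huv.1 rfl) with e | e
    · exact e
    · exact (clex_asymm huv (hθ.mono _ _ e)).elim
  have hx := reflect h
  have hx' := reflect h'
  have e := hcan x y x' y' hx hx'
  rw [hCc _ _ (hψ.mono _ _ hx), hCc _ _ (hψ.mono _ _ hx'), Option.some_inj] at e
  refine e.trans ?_
  rw [image_pair_eq_iff h h', hθ.injective.eq_iff, hθ.injective.eq_iff, and_assoc]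
  refine and_congr_right fun _ => and_congr_right fun _ => ?_
  have hd : SM x y x' y' ↔
      cdist ((φ ∘ ψ) x) ((φ ∘ ψ) y) = cdist ((φ ∘ ψ) x') ((φ ∘ ψ) y') :=
    ⟨fun hs => cdist_eq_iff.2 ((hθ.sm _ _ _ _ hx hx').2 hs).1, fun hs =>
      (hψ.sm _ _ _ _ hx hx').1
        (hskew _ _ _ _ (hψ.mono _ _ hx) (hψ.mono _ _ hx') (cdist_eq_iff.1 hs))⟩
  rw [hd]
  by_cases hj : j <;> simp [hj, Set.ext_iff]
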